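/- Under the Setup, a closed set E′ ⊆ X is T-small if and only if μ(Ω×E′) = 0 for every μ ∈ I_P(E). -/

import Mathlib

open MeasureTheory Set Filter Topology
open scoped ENNReal

section Defs

variable {Ω X Y : Type*}

/-- The fiber of a set `E ⊆ Ω × X` over `ω`. -/
def fiber (E : Set (Ω × X)) (ω : Ω) : Set X := {x | (ω, x) ∈ E}

/-- The iterates `T^n_ω = T_{θ^{n-1}ω} ∘ ⋯ ∘ T_ω` of a bundle RDS. -/
def itr (T : Ω → X → X) (θ : Ω → Ω) : ℕ → Ω → X → X
  | 0, _ => id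
  | n + 1, ω => itr T θ n (θ ω) ∘ T ω

/-- Two families of sets with common index set are combinatorially equivalent if
the corresponding sub-intersections are simultaneously nonempty. -/
def CombEquiv {ι : Type*} (A B : ι → Set Y) : Prop :=
  ∀ J : Set ι, (⋂ i ∈ J, A i).Nonempty ↔ (⋂ i ∈ J, B i).Nonempty

section Top

variable [TopologicalSpace X] [TopologicalSpace Y]

/-- A family of open sets covering the whole space. -/
def IsOpenCover {ι : Type*} (U : ι → Set X) : Prop :=
  (∀ i, IsOpen (U i)) ∧ (⋃ i, U i) = univ

/-- A family of relatively open subsets of `K` covering `K`. -/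
def IsOpenCoverOn (K : Set X) {ι : Type*} (U : ι → Set X) : Prop :=
  (∀ i, ∃ V : Set X, IsOpen V ∧ U i = V ∩ K) ∧ K ⊆ ⋃ i, U i

/-- `1 + ord`: the maximal multiplicity `sup_{x ∈ K} Σ_i 1_{U i}(x)` of the family `U` on `K`. -/
noncomputable def multOn (K : Set X) {ι : Type*} [Fintype ι] (U : ι → Set X) : ℕ :=
  sSup {m | ∃ x ∈ K, m = Nat.card {i // x ∈ U i}}

/-- `ord(U) = -1 + sup_{x ∈ K} Σ_i 1_{U i}(x)` (as a truncated natural number). -/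
noncomputable def ordOn (K : Set X) {ι : Type*} [Fintype ι] (U : ι → Set X) : ℕ :=
  multOn K U - 1

/-- `V` refines `U` if every member of `V` is contained in some member of `U`. -/
def Refines {ι κ : Type*} (V : κ → Set X) (U : ι → Set X) : Prop :=
  ∀ j, ∃ i, V j ⊆ U i

/-- `D(U) = min { ord(V) : V a finite relatively open cover of K refining U }`. -/
noncomputable def DOn (K : Set X) {ι : Type*} [Fintype ι] (U : ι → Set X) : ℕ :=
  sInf {q | ∃ (m : ℕ) (V : Fin m → Set X),
    IsOpenCoverOn K V ∧ Refines V U ∧ ordOn K V = q}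

/-- `f : X → Y` is `U`-compatible if some finite open cover of `Y` pulls back to
a refinement of `U`. -/
def Compatible {ι : Type*} (U : ι → Set X) (f : X → Y) : Prop :=
  ∃ (m : ℕ) (W : Fin m → Set Y), IsOpenCover W ∧ Refines (fun j => f ⁻¹' (W j)) U

/-- The covering dimension `dim Y = sup { D(V) : V a finite open cover of Y }`. -/
noncomputable def covDim (Z : Type*) [TopologicalSpace Z] : ℕ∞ :=
  ⨆ (m : ℕ) (V : Fin m → Set Z) (_ : IsOpenCover V), (DOn (univ : Set Z) V : ℕ∞)

/-- The dynamical cover `α_0^{n-1}(ω|E) = ⋁_{i=0}^{n-1} (T^i_ω)⁻¹ α(θ^i ω|E)` of the fiber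
`E_ω`, indexed by `Fin n → ι`. -/
def dynCover (T : Ω → X → X) (θ : Ω → Ω) (E : Set (Ω × X)) {ι : Type*}
    (U : ι → Set X) (n : ℕ) (ω : Ω) : (Fin n → ι) → Set X :=
  fun j => fiber E ω ∩
    ⋂ i : Fin n, (itr T θ (i : ℕ) ω) ⁻¹' (U (j i) ∩ fiber E (θ^[(i : ℕ)] ω))

end Top

/-- `Σ_{i=0}^{n-1} 1_A (T^i_ω x)`: the number of times the orbit of `x` up to time `n`
visits `A`. -/
noncomputable def orbCount (T : Ω → X → X) (θ : Ω → Ω) (A : Set X)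
    (n : ℕ) (ω : Ω) (x : X) : ℕ :=
  Nat.card {i : Fin n // itr T θ (i : ℕ) ω x ∈ A}

/-- `b_n(ω) = sup_{x ∈ E_ω} Σ_{i=0}^{n-1} 1_A (T^i_ω x)`. -/
noncomputable def bsup (T : Ω → X → X) (θ : Ω → Ω) (E : Set (Ω × X)) (A : Set X)
    (n : ℕ) (ω : Ω) : ℕ :=
  sSup {m | ∃ x ∈ fiber E ω, m = orbCount T θ A n ω x}

/-- The `ω`-orbit capacity `ocap^ω(A) = lim_{n→∞} (1/n) b_n(ω)` (as a `limsup`). -/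
noncomputable def ocap (T : Ω → X → X) (θ : Ω → Ω) (E : Set (Ω × X)) (A : Set X)
    (ω : Ω) : ℝ :=
  Filter.atTop.limsup (fun n : ℕ => (bsup T θ E A n ω : ℝ) / n)

section Metric

variable [PseudoMetricSpace X]

/-- The Bowen-type metric `d^ω_{ε,n}(x,y) = max_{0 ≤ k < n} d(T^k_ω x, T^k_ω y)/ε`. -/
noncomputable def dBowen (T : Ω → X → X) (θ : Ω → Ω) (ε : ℝ) (n : ℕ) (ω : Ω)
    (x y : X) : ℝ :=
  ⨆ k : Fin n, dist (itr T θ (k : ℕ) ω x) (itr T θ (k : ℕ) ω y) / ε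

/-- The diameter of a set with respect to a (not necessarily standard) metric `ρ`. -/
noncomputable def diamIn (ρ : X → X → ℝ) (A : Set X) : ℝ :=
  sSup {r | ∃ x ∈ A, ∃ y ∈ A, r = ρ x y}

/-- `cov(ω,ε,n)`: the minimal cardinality of a cover of `E_ω` by sets of
`d^ω_{ε,n}`-diameter strictly less than 1. -/
noncomputable def covN (T : Ω → X → X) (θ : Ω → Ω) (E : Set (Ω × X))
    (ε : ℝ) (n : ℕ) (ω : Ω) : ℕ :=
  sInf {m | ∃ A : Fin m → Set X, fiber E ω ⊆ (⋃ j, A j) ∧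
    ∀ j, diamIn (dBowen T θ ε n ω) (A j) < 1}

/-- `sep(ω,ε,n)`: the maximal cardinality of a subset of `E_ω` whose distinct points are
at `d^ω_{ε,n}`-distance at least 1. -/
noncomputable def sepN (T : Ω → X → X) (θ : Ω → Ω) (E : Set (Ω × X))
    (ε : ℝ) (n : ℕ) (ω : Ω) : ℕ :=
  sSup {m | ∃ F : Finset X, (F : Set X) ⊆ fiber E ω ∧ F.card = m ∧
    ∀ x ∈ F, ∀ y ∈ F, x ≠ y → 1 ≤ dBowen T θ ε n ω x y}

/-- `S'(ω,ε) = limsup_{n→∞} (1/n) log sep(ω,ε,n)`. -/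
noncomputable def Ssep (T : Ω → X → X) (θ : Ω → Ω) (E : Set (Ω × X))
    (ω : Ω) (ε : ℝ) : ℝ :=
  Filter.atTop.limsup (fun n : ℕ => Real.log (sepN T θ E ε n ω) / n)

/-- `S(ω,ε) = lim_{n→∞} (1/n) log cov(ω,ε,n)` (the limit exists by subadditivity and
equals the `limsup`). -/
noncomputable def Scov (T : Ω → X → X) (θ : Ω → Ω) (E : Set (Ω × X))
    (ω : Ω) (ε : ℝ) : ℝ :=
  Filter.atTop.limsup (fun n : ℕ => Real.log (covN T θ E ε n ω) / n)

/-- The fiberwise metric mean dimension computed from separated sets: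
`liminf_{1 > ε → 0⁺} S'(ω,ε)/(-log ε)`. -/
noncomputable def mdimMfibSep (T : Ω → X → X) (θ : Ω → Ω) (E : Set (Ω × X)) (ω : Ω) : ℝ :=
  Filter.liminf (fun ε => Ssep T θ E ω ε / (-Real.log ε)) (nhdsWithin 0 (Ioo (0:ℝ) 1))

/-- The fiberwise metric mean dimension `mdim_M(T,ω) = liminf_{1 > ε → 0⁺} S(ω,ε)/(-log ε)`. -/
noncomputable def mdimMfibCov (T : Ω → X → X) (θ : Ω → Ω) (E : Set (Ω × X)) (ω : Ω) : ℝ :=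
  Filter.liminf (fun ε => Scov T θ E ω ε / (-Real.log ε)) (nhdsWithin 0 (Ioo (0:ℝ) 1))

/-- The topological entropy `h_top(T) = ∫_Ω sup_{0<ε<1} S'(ω,ε) dP(ω)`. -/
noncomputable def htop (T : Ω → X → X) (θ : Ω → Ω) (E : Set (Ω × X))
    {mΩ : MeasurableSpace Ω} (P : Measure Ω) : ℝ≥0∞ :=
  ∫⁻ ω, ⨆ ε : Ioo (0:ℝ) 1, ENNReal.ofReal (Ssep T θ E ω (ε : ℝ)) ∂P

end Metric

section Mdim

variable [TopologicalSpace X] {mΩ : MeasurableSpace Ω}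

/-- The mean topological dimension with respect to the cover `U`:
`mdim(T,α) = lim_{n→∞} (1/n) ∫_Ω D(α_0^{n-1}(ω|E)) dP(ω)` (the limit exists by
subadditivity and equals the `liminf`). -/
noncomputable def mdimCov (P : Measure Ω) (T : Ω → X → X) (θ : Ω → Ω) (E : Set (Ω × X))
    {ι : Type*} [Fintype ι] (U : ι → Set X) : ℝ≥0∞ :=
  Filter.atTop.liminf (fun n : ℕ =>
    (∫⁻ ω, (DOn (fiber E ω) (dynCover T θ E U n ω) : ℝ≥0∞) ∂P) / (n : ℝ≥0∞))

/-- The mean topological dimension `mdim(T) = sup_α mdim(T,α)` over finite open covers. -/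
noncomputable def mdim (P : Measure Ω) (T : Ω → X → X) (θ : Ω → Ω)
    (E : Set (Ω × X)) : ℝ≥0∞ :=
  ⨆ (m : ℕ) (U : Fin m → Set X) (_ : IsOpenCover U), mdimCov P T θ E U

end Mdim

end Defs

/-!
If `A` is `T`-small, the orbit averages of the indicator of `A` tend to `0` almost everywhere for
every invariant `μ` carried by `E`, while their integral is constantly `μ (univ ×ˢ A)`.

For the converse, the upper mean of a bounded function `f` is the infimum of `∫ h ∂P` over the
functions `h` of `ω` alone that dominate `f` on the fibers of `E` up to a bounded coboundary. By
Hahn–Banach it is attained at `f` by a linear functional `Λ` that it dominates. Such a functional is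
positive, invariant, concentrated on `E` and equal to `∫ h ∂P` on functions `h` of `ω`. Although `Λ`
is only finitely additive, Dini's theorem on the compact fibers, made measurable in `ω` by the
universal measurability of projections, shows that it is a Daniell integral on the functions that
are continuous on fibers, so it comes there from an invariant measure `μ`. As `A` is closed,
`Λ (1_A) ≤ μ (univ ×ˢ A)`, so that the upper mean of `1_A` vanishes as soon as all invariant
measures vanish on `univ ×ˢ A`. In that case orbit counts are bounded by Birkhoff sums of functions
`h ≥ 0` of `ω` with arbitrarily small integral, and the maximal ergodic inequality shows that the
orbit capacity is `0` almost everywhere.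
-/

section Capacitability

variable {Z : Type*} {g : (ℕ → ℕ) → Z}

theorem exists_image_cylinder_subset [TopologicalSpace Z] (hg : Continuous g) {b : ℕ → ℕ}
    {U : Set Z} (hU : IsOpen U) (hb : g '' Iic b ⊆ U) :
    ∃ k, g '' {σ | ∀ i < k, σ i ≤ b i} ⊆ U := by
  by_contra! h
  simp only [image_subset_iff, not_subset] at h
  choose σ hσb hσU using h
  have hK : IsCompact (Iic b) := Icc_bot (a := b) ▸ isCompact_Icc
  obtain ⟨τ, hτ, φ, hφ, hlim⟩ := hK.tendsto_subseq fun k => (inf_le_right : σ k ⊓ b ≤ b)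
  have hlim' : Tendsto (σ ∘ φ) atTop (𝓝 τ) := by
    rw [tendsto_pi_nhds] at hlim ⊢
    intro i
    refine (hlim i).congr' ?_
    filter_upwards [eventually_gt_atTop i] with k hk
    exact inf_of_le_left (hσb (φ k) i (hk.trans_le (hφ.id_le k)))
  have hτU : ∀ᶠ k in atTop, g (σ (φ k)) ∈ U :=
    ((hg.tendsto τ).comp hlim').eventually (hU.mem_nhds (hb ⟨τ, hτ, rfl⟩))
  obtain ⟨k, hk⟩ := hτU.exists
  exact hσU _ hk

variable [MeasurableSpace Z] {ν : Measure Z} {c : ℝ≥0∞}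

theorem exists_forall_lt_measure_image_cylinder (hc : c < ν (range g)) :
    ∃ b : ℕ → ℕ, ∀ k, c < ν (g '' {σ | ∀ i < k, σ i ≤ b i}) := by
  have exists_bound (k : ℕ) (Q : {Q : Set (ℕ → ℕ) // c < ν (g '' Q)}) :
      ∃ m : ℕ, c < ν (g '' (Q.1 ∩ {σ | σ k ≤ m})) := by
    have hU : g '' Q.1 = ⋃ m : ℕ, g '' (Q.1 ∩ {σ | σ k ≤ m}) := by
      rw [← image_iUnion, ← inter_iUnion, iUnion_eq_univ_iff.2 fun σ => ⟨σ k, le_refl (σ k)⟩,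
        inter_univ]
    have hmono : Monotone fun m : ℕ => g '' (Q.1 ∩ {σ | σ k ≤ m}) := fun a b hab =>
      image_mono (inter_subset_inter_right _ fun σ (hσ : σ k ≤ a) => hσ.trans hab)
    have h := Q.2
    rw [hU, hmono.measure_iUnion] at h
    exact lt_iSup_iff.1 h
  choose m hm using exists_bound
  let Q : ℕ → {Q : Set (ℕ → ℕ) // c < ν (g '' Q)} := fun n =>
    Nat.rec ⟨univ, by rwa [image_univ]⟩ (fun k Q => ⟨Q.1 ∩ {σ | σ k ≤ m k Q}, hm k Q⟩) n
  have hQ (k : ℕ) : (Q k).1 ⊆ {σ | ∀ i < k, σ i ≤ m i (Q i)} := by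
    induction k with
    | zero => simp
    | succ k ih => exact fun σ hσ => Nat.forall_lt_succ_right.2 ⟨ih hσ.1, hσ.2⟩
  exact ⟨fun k => m k (Q k), fun k => (Q k).2.trans_le (measure_mono (image_mono (hQ k)))⟩

variable [TopologicalSpace Z]

theorem exists_isCompact_subset_range_of_lt [ν.OuterRegular] (hg : Continuous g)
    (hc : c < ν (range g)) : ∃ K ⊆ range g, IsCompact K ∧ c ≤ ν K := by
  obtain ⟨b, hb⟩ := exists_forall_lt_measure_image_cylinder hc
  refine ⟨g '' Iic b, image_subset_range _ _, (Icc_bot (a := b) ▸ isCompact_Icc).image hg, ?_⟩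
  by_contra! hlt
  obtain ⟨U, hbU, hU, hUc⟩ := Set.exists_isOpen_lt_of_lt _ _ hlt
  obtain ⟨k, hk⟩ := exists_image_cylinder_subset hg hU hbU
  exact ((hb k).trans_le (measure_mono hk)).not_gt hUc

theorem nullMeasurableSet_of_analyticSet [T2Space Z] [BorelSpace Z] [IsFiniteMeasure ν]
    [ν.OuterRegular] {A : Set Z} (hA : AnalyticSet A) : NullMeasurableSet A ν := by
  rw [AnalyticSet] at hA
  rcases hA with rfl | ⟨g, hg, rfl⟩
  · exact .empty
  rcases eq_or_ne (ν (range g)) 0 with h0 | h0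
  · exact .of_null h0
  obtain ⟨c, -, hcA, hclim⟩ := exists_seq_strictMono_tendsto' (pos_iff_ne_zero.2 h0)
  choose K hKA hKc hK using fun n => exists_isCompact_subset_range_of_lt hg (hcA n).2
  have hmeas : MeasurableSet (⋃ n, K n) := .iUnion fun n => (hKc n).measurableSet
  have hle : ν (range g) ≤ ν (⋃ n, K n) :=
    le_of_tendsto' hclim fun n => (hK n).trans (measure_mono (subset_iUnion K n))
  exact hmeas.nullMeasurableSet.congr (ae_eq_of_subset_of_measure_ge (iUnion_subset hKA) hle
    hmeas.nullMeasurableSet (measure_ne_top _ _))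

end Capacitability

section Projection

variable {Ω X : Type*} [MeasurableSpace Ω] [MeasurableSpace X] {S : Set (Ω × X)}

theorem exists_measurable_preimage_prodMap (hS : MeasurableSet S) :
    ∃ (q : Ω → ℕ → Bool) (S₀ : Set ((ℕ → Bool) × X)), Measurable q ∧ MeasurableSet S₀ ∧
      S = Prod.map q id ⁻¹' S₀ := by
  classical
  rw [← generateFrom_prod] at hS
  induction hS with
  | basic S hS =>
    obtain ⟨A, hA, B, hB, rfl⟩ := hS
    refine ⟨fun ω _ => decide (ω ∈ A), ((fun z => z 0) ⁻¹' {true}) ×ˢ B,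
      measurable_pi_lambda _ fun _ => measurable_to_bool ?_,
      .prod (measurable_pi_apply 0 (.singleton true)) hB, ?_⟩
    · convert! hA
      ext; simp
    · ext; simp
  | empty => exact ⟨fun _ _ => true, ∅, measurable_const, .empty, by simp⟩
  | compl S _ ih =>
    obtain ⟨q, S₀, hq, hS₀, rfl⟩ := ih
    exact ⟨q, S₀ᶜ, hq, hS₀.compl, rfl⟩
  | iUnion S _ ih =>
    choose q S₀ hq hS₀ hS using ih
    refine ⟨fun ω n => q n.unpair.1 ω n.unpair.2,
      ⋃ i, Prod.map (fun z k => z (Nat.pair i k)) id ⁻¹' S₀ i,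
      measurable_pi_lambda _ fun n => (measurable_pi_apply _).comp (hq _), .iUnion fun i => ?_, ?_⟩
    · exact (measurable_pi_lambda _ fun k => measurable_pi_apply _).prodMap measurable_id (hS₀ i)
    · ext p
      simp [hS, Prod.map]

-- A measurable set in `Ω × X` is a pull-back from the standard Borel space `(ℕ → Bool) × X`, where
-- projections of Borel sets are analytic, hence universally measurable.
theorem nullMeasurableSet_image_fst [TopologicalSpace X] [PolishSpace X] [BorelSpace X]
    (P : Measure Ω) [IsFiniteMeasure P] (hS : MeasurableSet S) :
    NullMeasurableSet (Prod.fst '' S) P := by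
  obtain ⟨q, S₀, hq, hS₀, rfl⟩ := exists_measurable_preimage_prodMap hS
  have hA : AnalyticSet (Prod.fst '' S₀) := hS₀.analyticSet_image measurable_fst
  have h : Prod.fst '' (Prod.map q id ⁻¹' S₀) = q ⁻¹' (Prod.fst '' S₀) := by
    ext ω
    simp
  exact h ▸ (nullMeasurableSet_of_analyticSet (ν := P.map q) hA).preimage
    (hq.measurePreserving P).quasiMeasurePreserving

end Projection

section DaniellStone

variable {Y : Type*}

/-- `L` is a vector lattice of real functions containing the constants. -/
structure IsUnitalVectorLattice (L : Submodule ℝ (Y → ℝ)) : Prop where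
  one_mem : 1 ∈ L
  sup_mem : ∀ ⦃f⦄, f ∈ L → ∀ ⦃g⦄, g ∈ L → f ⊔ g ∈ L

/-- An elementary integral in the sense of Daniell: a positive linear functional on a unital vector
lattice of functions, continuous along sequences that decrease to `0`. It is encoded as a linear
functional on all functions, of which only the values on `L` matter. -/
structure IsDaniellIntegral (L : Submodule ℝ (Y → ℝ)) (Λ : (Y → ℝ) →ₗ[ℝ] ℝ) : Prop
    extends IsUnitalVectorLattice L where
  map_nonneg : ∀ ⦃f⦄, f ∈ L → 0 ≤ f → 0 ≤ Λ f
  tendsto_map_zero : ∀ ⦃f : ℕ → Y → ℝ⦄, (∀ n, f n ∈ L) → Antitone f →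
    (∀ y, Tendsto (f · y) atTop (𝓝 0)) → Tendsto (fun n => Λ (f n)) atTop (𝓝 0)

/-- The sequence `u` of nonnegative functions in `L` increases pointwise to the indicator function
of `S`. -/
structure ApproximatesIndicator (L : Submodule ℝ (Y → ℝ)) (u : ℕ → Y → ℝ) (S : Set Y) : Prop where
  mem : ∀ n, u n ∈ L
  nonneg : ∀ n, 0 ≤ u n
  mono : Monotone u
  tendsto : ∀ y, Tendsto (u · y) atTop (𝓝 (S.indicator 1 y))

/-- The sets on which the measure of a Daniell integral on `L` is determined directly, in the way
open sets are for the integral of continuous functions: those whose indicator function is the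
increasing limit of nonnegative functions in `L`. -/
def IsDaniellOpen (L : Submodule ℝ (Y → ℝ)) (S : Set Y) : Prop :=
  ∃ u, ApproximatesIndicator L u S

/-- The content of `S` seen from inside, the supremum of `Λ f` over all `f ∈ L` below the indicator
function of `S`; the measure of a Daniell integral agrees with it on Daniell open sets. -/
noncomputable def innerContent (L : Submodule ℝ (Y → ℝ)) (Λ : (Y → ℝ) →ₗ[ℝ] ℝ) (S : Set Y) :
    ℝ≥0∞ :=
  ⨆ f ∈ {f | f ∈ L ∧ f ≤ S.indicator 1}, ENNReal.ofReal (Λ f)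

variable {L : Submodule ℝ (Y → ℝ)} {Λ : (Y → ℝ) →ₗ[ℝ] ℝ} {S U V : Set Y} {u : ℕ → Y → ℝ}

theorem ApproximatesIndicator.le_indicator (hu : ApproximatesIndicator L u S) (n : ℕ) :
    u n ≤ S.indicator 1 :=
  fun y => Monotone.ge_of_tendsto (fun _ _ hmn => hu.mono hmn y) (hu.tendsto y) n

theorem measurableSet_of_isDaniellOpen [MeasurableSpace Y] (hL : ∀ f ∈ L, Measurable f)
    (hS : IsDaniellOpen L S) : MeasurableSet S := by
  obtain ⟨u, hu⟩ := hS
  have hmeas : Measurable (S.indicator (1 : Y → ℝ)) :=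
    measurable_of_tendsto_metrizable (fun n => hL _ (hu.mem n)) (tendsto_pi_nhds.2 hu.tendsto)
  exact (measurable_indicator_const_iff (1 : ℝ)).1 hmeas

theorem approximatesIndicator_indicator (hS : S.indicator 1 ∈ L) :
    ApproximatesIndicator L (fun _ => S.indicator 1) S :=
  ⟨fun _ => hS, fun _ => indicator_nonneg fun _ _ => zero_le_one, monotone_const,
    fun _ => tendsto_const_nhds⟩

theorem ApproximatesIndicator.comp {g : Y → Y} (hu : ApproximatesIndicator L u S)
    (hg : ∀ f ∈ L, f ∘ g ∈ L) : ApproximatesIndicator L (fun n => u n ∘ g) (g ⁻¹' S) :=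
  ⟨fun n => hg _ (hu.mem n), fun n y => hu.nonneg n (g y), fun _ _ hmn y => hu.mono hmn (g y),
    fun y => hu.tendsto (g y)⟩

theorem ofReal_map_le_innerContent {f : Y → ℝ} (hf : f ∈ L) (hfS : f ≤ S.indicator 1) :
    ENNReal.ofReal (Λ f) ≤ innerContent L Λ S :=
  le_iSup₂ (f := fun f (_ : f ∈ {f | f ∈ L ∧ f ≤ S.indicator 1}) => ENNReal.ofReal (Λ f)) f
    ⟨hf, hfS⟩

theorem innerContent_mono (h : U ⊆ V) : innerContent L Λ U ≤ innerContent L Λ V :=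
  iSup₂_le fun _ hf => ofReal_map_le_innerContent hf.1
    (hf.2.trans (indicator_le_indicator_of_subset h fun _ => zero_le_one))

theorem approximatesIndicator_empty : ApproximatesIndicator L 0 ∅ :=
  ⟨fun _ => L.zero_mem, fun _ => le_rfl, monotone_const, by simp⟩

namespace IsUnitalVectorLattice

variable (h : IsUnitalVectorLattice L)
include h

theorem inf_mem {f g : Y → ℝ} (hf : f ∈ L) (hg : g ∈ L) : f ⊓ g ∈ L := by
  rw [← neg_neg (f ⊓ g), neg_inf]
  exact L.neg_mem (h.sup_mem (L.neg_mem hf) (L.neg_mem hg))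

theorem isDaniellOpen_inter (hU : IsDaniellOpen L U) (hV : IsDaniellOpen L V) :
    IsDaniellOpen L (U ∩ V) := by
  obtain ⟨u, hu⟩ := hU
  obtain ⟨v, hv⟩ := hV
  refine ⟨fun n => u n ⊓ v n, fun n => h.inf_mem (hu.mem n) (hv.mem n),
    fun n => le_inf (hu.nonneg n) (hv.nonneg n),
    fun m n hmn => inf_le_inf (hu.mono hmn) (hv.mono hmn), fun y => ?_⟩
  have hlim := (hu.tendsto y).min (hv.tendsto y)
  by_cases hyU : y ∈ U <;> by_cases hyV : y ∈ V <;> simpa [hyU, hyV] using hlim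

theorem isDaniellOpen_setOf_pos {g : Y → ℝ} (hg : g ∈ L) : IsDaniellOpen L {y | 0 < g y} := by
  have hpos : g ⊔ 0 ∈ L := h.sup_mem hg L.zero_mem
  refine ⟨fun n => 1 ⊓ n • (g ⊔ 0), fun n => h.inf_mem h.one_mem (L.nsmul_mem hpos n),
    fun n => le_inf zero_le_one (nsmul_nonneg le_sup_right n),
    fun m n hmn => inf_le_inf_left _ (nsmul_le_nsmul_left le_sup_right hmn), fun y => ?_⟩
  by_cases hy : 0 < g y
  · obtain ⟨N, hN⟩ := exists_nat_ge (g y)⁻¹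
    refine tendsto_const_nhds.congr' ?_
    filter_upwards [eventually_ge_atTop N] with n hn
    have hone : 1 ≤ n * g y := by
      rw [← inv_le_iff_one_le_mul₀ hy]
      exact hN.trans (Nat.cast_le.2 hn)
    simp [hy, max_eq_left hy.le, hone]
  · simp [hy, max_eq_right (not_lt.1 hy)]

-- `1 ⊓ ∑ i < n, u i n` is a diagonal choice that stays in `L` although the union is countable.
theorem approximatesIndicator_iUnion {u : ℕ → ℕ → Y → ℝ} {S : ℕ → Set Y}
    (hu : ∀ i, ApproximatesIndicator L (u i) (S i)) :
    ApproximatesIndicator L (fun n => 1 ⊓ ∑ i ∈ Finset.range n, u i n) (⋃ i, S i) where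
  mem n := h.inf_mem h.one_mem (L.sum_mem fun i _ => (hu i).mem n)
  nonneg n := le_inf zero_le_one (Finset.sum_nonneg fun i _ => (hu i).nonneg n)
  mono m n hmn := inf_le_inf_left 1 <| by
    calc ∑ i ∈ Finset.range m, u i m ≤ ∑ i ∈ Finset.range m, u i n :=
          Finset.sum_le_sum fun i _ => (hu i).mono hmn
      _ ≤ ∑ i ∈ Finset.range n, u i n := Finset.sum_le_sum_of_subset_of_nonneg
          (Finset.range_mono hmn) fun i _ _ => (hu i).nonneg n
  tendsto y := by
    simp only [Pi.inf_apply, Pi.one_apply, Finset.sum_apply]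
    by_cases hy : y ∈ ⋃ i, S i
    · obtain ⟨i, hi⟩ := mem_iUnion.1 hy
      have hlim := (hu i).tendsto y
      simp only [indicator_of_mem hi, indicator_of_mem hy, Pi.one_apply] at hlim ⊢
      refine tendsto_of_tendsto_of_tendsto_of_le_of_le'
        (by simpa using (tendsto_const_nhds (x := (1 : ℝ))).min hlim) tendsto_const_nhds ?_
        (.of_forall fun n => min_le_left _ _)
      filter_upwards [eventually_gt_atTop i] with n hn
      exact min_le_min_left _ (Finset.single_le_sum (f := fun i => u i n y)
        (fun j _ => (hu j).nonneg n y) (Finset.mem_range.2 hn))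
    · have hzero (i n : ℕ) : u i n y = 0 := by
        have hle := (hu i).le_indicator n y
        rw [indicator_of_notMem fun hi => hy (mem_iUnion.2 ⟨i, hi⟩)] at hle
        exact hle.antisymm ((hu i).nonneg n y)
      simp [hzero, hy]

theorem isDaniellOpen_iUnion {S : ℕ → Set Y} (hS : ∀ i, IsDaniellOpen L (S i)) :
    IsDaniellOpen L (⋃ i, S i) := by
  choose u hu using hS
  exact ⟨_, h.approximatesIndicator_iUnion hu⟩

end IsUnitalVectorLattice

namespace IsDaniellIntegral

variable (h : IsDaniellIntegral L Λ)
include h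

theorem map_mono {f g : Y → ℝ} (hf : f ∈ L) (hg : g ∈ L) (hfg : f ≤ g) : Λ f ≤ Λ g := by
  simpa using h.map_nonneg (L.sub_mem hg hf) (sub_nonneg.2 hfg)

theorem innerContent_eq_iSup (hu : ApproximatesIndicator L u S) :
    innerContent L Λ S = ⨆ n, ENNReal.ofReal (Λ (u n)) := by
  refine le_antisymm (iSup₂_le fun f hf => ?_)
    (iSup_le fun n => ofReal_map_le_innerContent (hu.mem n) (hu.le_indicator n))
  have hrmem (n : ℕ) : (f - u n) ⊔ 0 ∈ L := h.sup_mem (L.sub_mem hf.1 (hu.mem n)) L.zero_mem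
  have hrest : Tendsto (fun n => Λ ((f - u n) ⊔ 0)) atTop (𝓝 0) := by
    refine h.tendsto_map_zero hrmem
      (fun m n hmn => sup_le_sup_right (sub_le_sub_left (hu.mono hmn) f) 0) fun y => ?_
    have hlim := ((hu.tendsto y).const_sub (f y)).max (tendsto_const_nhds (x := (0 : ℝ)))
    rwa [max_eq_right (sub_nonpos.2 (hf.2 y))] at hlim
  have hle (n : ℕ) : ENNReal.ofReal (Λ f) ≤
      (⨆ n, ENNReal.ofReal (Λ (u n))) + ENNReal.ofReal (Λ ((f - u n) ⊔ 0)) := by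
    refine (ENNReal.ofReal_le_ofReal ?_).trans (ENNReal.ofReal_add_le.trans
      (add_le_add_left (le_iSup (fun n => ENNReal.ofReal (Λ (u n))) n) _))
    rw [← map_add]
    exact h.map_mono hf.1 (L.add_mem (hu.mem n) (hrmem n))
      (sub_le_iff_le_add'.1 le_sup_left)
  simpa using ge_of_tendsto' (tendsto_const_nhds.add (ENNReal.tendsto_ofReal hrest)) hle

theorem innerContent_of_indicator_mem (hS : S.indicator 1 ∈ L) :
    innerContent L Λ S = ENNReal.ofReal (Λ (S.indicator 1)) := by
  rw [h.innerContent_eq_iSup (approximatesIndicator_indicator hS), ciSup_const]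

theorem innerContent_preimage {g : Y → Y} (hgL : ∀ f ∈ L, f ∘ g ∈ L)
    (hgΛ : ∀ f ∈ L, Λ (f ∘ g) = Λ f) (hS : IsDaniellOpen L S) :
    innerContent L Λ (g ⁻¹' S) = innerContent L Λ S := by
  obtain ⟨u, hu⟩ := hS
  rw [h.innerContent_eq_iSup (hu.comp hgL), h.innerContent_eq_iSup hu]
  exact iSup_congr fun n => by rw [hgΛ _ (hu.mem n)]

theorem innerContent_empty : innerContent L Λ ∅ = 0 := by
  simp [h.innerContent_eq_iSup approximatesIndicator_empty]

theorem innerContent_iUnion_le {S : ℕ → Set Y} (hS : ∀ i, IsDaniellOpen L (S i)) :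
    innerContent L Λ (⋃ i, S i) ≤ ∑' i, innerContent L Λ (S i) := by
  choose u hu using hS
  rw [h.innerContent_eq_iSup (h.approximatesIndicator_iUnion hu)]
  refine iSup_le fun n => ?_
  have hsum : ∑ i ∈ Finset.range n, u i n ∈ L := L.sum_mem fun i _ => (hu i).mem n
  calc ENNReal.ofReal (Λ (1 ⊓ ∑ i ∈ Finset.range n, u i n))
      ≤ ENNReal.ofReal (Λ (∑ i ∈ Finset.range n, u i n)) :=
        ENNReal.ofReal_le_ofReal (h.map_mono (h.inf_mem h.one_mem hsum) hsum inf_le_right)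
    _ = ∑ i ∈ Finset.range n, ENNReal.ofReal (Λ (u i n)) := by
        rw [map_sum, ENNReal.ofReal_sum_of_nonneg fun i _ =>
          h.map_nonneg ((hu i).mem n) ((hu i).nonneg n)]
    _ ≤ ∑ i ∈ Finset.range n, innerContent L Λ (S i) := Finset.sum_le_sum fun i _ =>
        ofReal_map_le_innerContent ((hu i).mem n) ((hu i).le_indicator n)
    _ ≤ ∑' i, innerContent L Λ (S i) := ENNReal.sum_le_tsum _

-- Since `w < δ` on `W := V ∩ {w < δ}`, every `x ≤ 1_W` in `L` satisfies `x + (w - δ) ≤ 1_V`.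
theorem innerContent_inter_setOf_lt_add_le {w : Y → ℝ} (hw : w ∈ L) (hw0 : 0 ≤ w)
    (hwV : w ≤ V.indicator 1) (hV : IsDaniellOpen L V) {δ : ℝ} (hδ : 0 < δ) :
    innerContent L Λ (V ∩ {y | 0 < (δ • (1 : Y → ℝ) - w) y}) + ENNReal.ofReal (Λ w) ≤
      innerContent L Λ V + ENNReal.ofReal (δ * Λ 1) := by
  set W := V ∩ {y | 0 < (δ • (1 : Y → ℝ) - w) y}
  have hδmem : δ • (1 : Y → ℝ) ∈ L := L.smul_mem δ h.one_mem
  obtain ⟨x, hx⟩ : IsDaniellOpen L W :=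
    h.isDaniellOpen_inter hV (h.isDaniellOpen_setOf_pos (L.sub_mem hδmem hw))
  rw [h.innerContent_eq_iSup hx, ENNReal.iSup_add]
  refine iSup_le fun n => ?_
  have hle : x n + w - δ • (1 : Y → ℝ) ≤ V.indicator 1 := fun y => by
    have hxW := hx.le_indicator n y
    have hwy := hwV y
    have hw0y := hw0 y
    by_cases hyV : y ∈ V <;> by_cases hy : w y < δ <;> simp_all [W] <;> linarith
  rw [← ENNReal.ofReal_add (h.map_nonneg (hx.mem n) (hx.nonneg n)) (h.map_nonneg hw hw0),
    ← map_add, show Λ (x n + w) = Λ (x n + w - δ • (1 : Y → ℝ)) + δ * Λ 1 by simp]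
  exact ENNReal.ofReal_add_le.trans (add_le_add_left (ofReal_map_le_innerContent
    (L.sub_mem (L.add_mem (hx.mem n) hw) hδmem) hle) _)

/-- The outer measure whose value on `S` is the infimum of the content of the Daniell open sets
containing `S`; it restricts to the measure of the Daniell integral. -/
noncomputable def outerMeasure : OuterMeasure Y :=
  inducedOuterMeasure (P := IsDaniellOpen L) (fun S _ => innerContent L Λ S)
    ⟨0, approximatesIndicator_empty⟩ h.innerContent_empty

theorem outerMeasure_of_isDaniellOpen (hS : IsDaniellOpen L S) :
    h.outerMeasure S = innerContent L Λ S :=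
  inducedOuterMeasure_eq' (fun _ => h.isDaniellOpen_iUnion) (fun _ => h.innerContent_iUnion_le)
    (fun _ _ _ _ => innerContent_mono) hS

theorem outerMeasure_inter_add_diff_le (hU : IsDaniellOpen L U) (hV : IsDaniellOpen L V) :
    h.outerMeasure (V ∩ U) + h.outerMeasure (V \ U) ≤ h.outerMeasure V := by
  have hVU : IsDaniellOpen L (V ∩ U) := h.isDaniellOpen_inter hV hU
  obtain ⟨w, hw⟩ := hVU
  have happrox (n : ℕ) (δ : ℝ) (hδ : 0 < δ) : ENNReal.ofReal (Λ (w n)) + h.outerMeasure (V \ U) ≤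
      h.outerMeasure V + ENNReal.ofReal (δ * Λ 1) := by
    have hsub : V \ U ⊆ V ∩ {y | 0 < (δ • (1 : Y → ℝ) - w n) y} := fun y hy => by
      have hwy := hw.le_indicator n y
      rw [indicator_of_notMem fun hyVU => hy.2 hyVU.2] at hwy
      simpa [hy.1] using hwy.trans_lt hδ
    have hopen : IsDaniellOpen L (V ∩ {y | 0 < (δ • (1 : Y → ℝ) - w n) y}) :=
      h.isDaniellOpen_inter hV
        (h.isDaniellOpen_setOf_pos (L.sub_mem (L.smul_mem δ h.one_mem) (hw.mem n)))
    have hwV : w n ≤ V.indicator 1 := (hw.le_indicator n).trans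
      (indicator_le_indicator_of_subset inter_subset_left fun _ => zero_le_one)
    rw [add_comm, h.outerMeasure_of_isDaniellOpen hV]
    exact (add_le_add_left ((measure_mono hsub).trans_eq
      (h.outerMeasure_of_isDaniellOpen hopen)) _).trans
      (h.innerContent_inter_setOf_lt_add_le (hw.mem n) (hw.nonneg n) hwV hV hδ)
  rw [h.outerMeasure_of_isDaniellOpen ⟨w, hw⟩, h.innerContent_eq_iSup hw, ENNReal.iSup_add]
  refine iSup_le fun n => ge_of_tendsto (x := 𝓝[>] (0 : ℝ))
    (f := fun δ => h.outerMeasure V + ENNReal.ofReal (δ * Λ 1)) ?_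
    (eventually_nhdsWithin_of_forall (happrox n))
  have hlim : Tendsto (fun δ : ℝ => ENNReal.ofReal (δ * Λ 1)) (𝓝[>] 0) (𝓝 0) := by
    have hcont : Continuous fun δ : ℝ => ENNReal.ofReal (δ * Λ 1) :=
      ENNReal.continuous_ofReal.comp (continuous_mul_const _)
    simpa using (hcont.tendsto 0).mono_left nhdsWithin_le_nhds
  simpa using tendsto_const_nhds.add hlim

theorem exists_measure_eq_innerContent [MeasurableSpace Y]
    (hgen : ‹MeasurableSpace Y› = .generateFrom {S | IsDaniellOpen L S}) :
    ∃ μ : Measure Y, ∀ S, IsDaniellOpen L S → μ S = innerContent L Λ S := by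
  have hcar : ‹MeasurableSpace Y› ≤ h.outerMeasure.caratheodory := by
    rw [hgen]
    refine MeasurableSpace.generateFrom_le fun U hU => ?_
    exact (inducedOuterMeasure_caratheodory (fun _ => h.isDaniellOpen_iUnion)
      (fun _ => h.innerContent_iUnion_le) (fun _ _ _ _ => innerContent_mono) U).2
      fun V hV => h.outerMeasure_inter_add_diff_le hU hV
  refine ⟨h.outerMeasure.toMeasure hcar, fun S hS => ?_⟩
  rw [toMeasure_apply _ _ (hgen ▸ MeasurableSpace.measurableSet_generateFrom hS),
    h.outerMeasure_of_isDaniellOpen hS]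

theorem measurePreserving_of_comp [MeasurableSpace Y]
    (hgen : ‹MeasurableSpace Y› = .generateFrom {S | IsDaniellOpen L S}) {μ : Measure Y}
    [IsFiniteMeasure μ] (hμ : ∀ S, IsDaniellOpen L S → μ S = innerContent L Λ S) {g : Y → Y}
    (hg : Measurable g) (hgL : ∀ f ∈ L, f ∘ g ∈ L) (hgΛ : ∀ f ∈ L, Λ (f ∘ g) = Λ f) :
    MeasurePreserving g μ μ := by
  refine ⟨hg, ext_of_generate_finite _ hgen
    (fun S hS U hU _ => h.isDaniellOpen_inter hS hU) (fun S hS => ?_) ?_⟩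
  · have hSm : MeasurableSet S := hgen ▸ MeasurableSpace.measurableSet_generateFrom hS
    have hgS : IsDaniellOpen L (g ⁻¹' S) :=
      let ⟨_, hu⟩ := hS
      ⟨_, hu.comp hgL⟩
    rw [Measure.map_apply hg hSm, hμ _ hgS, hμ S hS, h.innerContent_preimage hgL hgΛ hS]
  · rw [Measure.map_apply hg .univ, preimage_univ]

end IsDaniellIntegral

end DaniellStone

theorem integral_comp_of_measurePreserving {α β F : Type*} [MeasurableSpace α] [MeasurableSpace β]
    [NormedAddCommGroup F] [NormedSpace ℝ F] {μ : Measure α} {ν : Measure β} {f : α → β}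
    (hf : MeasurePreserving f μ ν) {g : β → F} (hg : AEStronglyMeasurable g ν) :
    ∫ a, g (f a) ∂μ = ∫ b, g b ∂ν := by
  rw [← hf.map_eq, integral_map hf.aemeasurable (hf.map_eq.symm ▸ hg)]

section MaximalInequality

variable {Ω : Type*} {θ : Ω → Ω} {g h : Ω → ℝ}

/-- The running maximum `max_{0 ≤ k ≤ n} birkhoffSum θ g k` of the Birkhoff sums of `g`, defined by
the recursion on which Garsia's proof of the maximal ergodic inequality rests. -/
noncomputable def maxBirkhoffSum (θ : Ω → Ω) (g : Ω → ℝ) : ℕ → Ω → ℝ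
  | 0, _ => 0
  | n + 1, ω => max 0 (g ω + maxBirkhoffSum θ g n (θ ω))

theorem maxBirkhoffSum_nonneg (n : ℕ) (ω : Ω) : 0 ≤ maxBirkhoffSum θ g n ω := by
  cases n
  · exact le_rfl
  · exact le_max_left _ _

theorem maxBirkhoffSum_le_succ (n : ℕ) (ω : Ω) :
    maxBirkhoffSum θ g n ω ≤ maxBirkhoffSum θ g (n + 1) ω := by
  induction n generalizing ω with
  | zero => exact maxBirkhoffSum_nonneg _ _
  | succ n ih => exact max_le_max le_rfl (add_le_add_right (ih _) _)

theorem birkhoffSum_le_maxBirkhoffSum (n : ℕ) (ω : Ω) :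
    birkhoffSum θ g n ω ≤ maxBirkhoffSum θ g n ω := by
  induction n generalizing ω with
  | zero => exact le_rfl
  | succ n ih =>
    rw [birkhoffSum_succ']
    exact le_max_of_le_right (add_le_add_right (ih _) _)

theorem maxBirkhoffSum_sub_comp_le_indicator (n : ℕ) (ω : Ω) :
    maxBirkhoffSum θ g (n + 1) ω - maxBirkhoffSum θ g (n + 1) (θ ω) ≤
      {ω | 0 < maxBirkhoffSum θ g (n + 1) ω}.indicator g ω := by
  by_cases hpos : 0 < maxBirkhoffSum θ g (n + 1) ω
  · have hrec : maxBirkhoffSum θ g (n + 1) ω = g ω + maxBirkhoffSum θ g n (θ ω) :=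
      max_eq_right ((lt_max_iff.1 hpos).resolve_left (lt_irrefl 0)).le
    rw [indicator_of_mem (by exact hpos), hrec]
    linarith [maxBirkhoffSum_le_succ (θ := θ) (g := g) n (θ ω)]
  · rw [indicator_of_notMem (by exact hpos)]
    linarith [maxBirkhoffSum_nonneg (θ := θ) (g := g) (n + 1) (θ ω)]

variable [MeasurableSpace Ω] {P : Measure Ω}

theorem integrable_birkhoffSum (hθ : MeasurePreserving θ P P) (hg : Integrable g P) (n : ℕ) :
    Integrable (birkhoffSum θ g n) P :=
  integrable_finsetSum _ fun k _ => (hθ.iterate k).integrable_comp_of_integrable hg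

theorem integral_birkhoffSum (hθ : MeasurePreserving θ P P) (hg : Integrable g P) (n : ℕ) :
    ∫ ω, birkhoffSum θ g n ω ∂P = n * ∫ ω, g ω ∂P := by
  simp only [birkhoffSum]
  rw [integral_finsetSum (f := fun k ω => g (θ^[k] ω)) _ fun k _ =>
    (hθ.iterate k).integrable_comp_of_integrable hg]
  simp [integral_comp_of_measurePreserving (hθ.iterate _) hg.1]

theorem integrable_maxBirkhoffSum (hθ : MeasurePreserving θ P P) (hg : Integrable g P) (n : ℕ) :
    Integrable (maxBirkhoffSum θ g n) P := by
  induction n with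
  | zero => exact integrable_zero _ _ _
  | succ n ih => exact (integrable_zero _ _ _).sup (hg.add (hθ.integrable_comp_of_integrable ih))

theorem nullMeasurableSet_maxBirkhoffSum_pos (hθ : MeasurePreserving θ P P) (hg : Integrable g P)
    (n : ℕ) : NullMeasurableSet {ω | 0 < maxBirkhoffSum θ g n ω} P :=
  nullMeasurableSet_lt aemeasurable_const (integrable_maxBirkhoffSum hθ hg n).1.aemeasurable

theorem setIntegral_maxBirkhoffSum_pos_nonneg (hθ : MeasurePreserving θ P P)
    (hg : Integrable g P) (n : ℕ) :
    0 ≤ ∫ ω in {ω | 0 < maxBirkhoffSum θ g (n + 1) ω}, g ω ∂P := by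
  have hnull := nullMeasurableSet_maxBirkhoffSum_pos hθ hg (n + 1)
  have hM := integrable_maxBirkhoffSum hθ hg (n + 1)
  have hMθ : Integrable (fun ω => maxBirkhoffSum θ g (n + 1) (θ ω)) P :=
    hθ.integrable_comp_of_integrable hM
  rw [← integral_indicator₀ hnull]
  calc 0 = ∫ ω, (maxBirkhoffSum θ g (n + 1) ω - maxBirkhoffSum θ g (n + 1) (θ ω)) ∂P := by
        rw [integral_sub hM hMθ, integral_comp_of_measurePreserving hθ hM.1, sub_self]
    _ ≤ _ := integral_mono (hM.sub hMθ) (hg.indicator₀ hnull)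
        (maxBirkhoffSum_sub_comp_le_indicator n)

variable [IsFiniteMeasure P]

theorem mul_measure_exists_lt_birkhoffSum_le (hθ : MeasurePreserving θ P P) (hi : Integrable h P)
    (h0 : 0 ≤ᵐ[P] h) {c : ℝ} (hc : 0 ≤ c) :
    ENNReal.ofReal c * P {ω | ∃ n : ℕ, c * n < birkhoffSum θ h n ω} ≤
      ENNReal.ofReal (∫ ω, h ω ∂P) := by
  have hg : Integrable (h - fun _ => c) P := hi.sub (integrable_const c)
  let A (n : ℕ) : Set Ω := {ω | 0 < maxBirkhoffSum θ (h - fun _ => c) (n + 1) ω}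
  have hA (n : ℕ) : ENNReal.ofReal c * P (A n) ≤ ENNReal.ofReal (∫ ω, h ω ∂P) := by
    have hmax : 0 ≤ ∫ ω in A n, (h ω - c) ∂P := setIntegral_maxBirkhoffSum_pos_nonneg hθ hg n
    rw [integral_sub hi.integrableOn integrableOn_const, setIntegral_const, smul_eq_mul] at hmax
    have hle : ∫ ω in A n, h ω ∂P ≤ ∫ ω, h ω ∂P := setIntegral_le_integral hi h0
    rw [← ofReal_measureReal, ← ENNReal.ofReal_mul hc]
    exact ENNReal.ofReal_le_ofReal (by linarith)
  have hmono : Monotone A := monotone_nat_of_le_succ fun n ω hω =>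
    lt_of_lt_of_le hω (maxBirkhoffSum_le_succ _ ω)
  have hsub : {ω | ∃ n : ℕ, c * n < birkhoffSum θ h n ω} ⊆ ⋃ n, A n := by
    rintro ω ⟨n, hn⟩
    refine mem_iUnion.2 ⟨n, lt_of_lt_of_le ?_
      ((birkhoffSum_le_maxBirkhoffSum n ω).trans (maxBirkhoffSum_le_succ n ω))⟩
    have hsum : birkhoffSum θ (h - fun _ => c) n ω = birkhoffSum θ h n ω - c * n := by
      simp [birkhoffSum, mul_comm]
    rw [hsum]
    exact sub_pos.2 hn
  calc ENNReal.ofReal c * P {ω | ∃ n : ℕ, c * n < birkhoffSum θ h n ω}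
      ≤ ENNReal.ofReal c * P (⋃ n, A n) := mul_le_mul_right (measure_mono hsub) _
    _ = ⨆ n, ENNReal.ofReal c * P (A n) := by rw [hmono.measure_iUnion, ENNReal.mul_iSup]
    _ ≤ ENNReal.ofReal (∫ ω, h ω ∂P) := iSup_le hA

theorem tendsto_div_atTop_zero_of_le_mul_add {a : ℕ → ℝ} (ha : ∀ n, 0 ≤ a n)
    (hle : ∀ c > 0, ∃ B, ∀ n : ℕ, a n ≤ c * n + B) :
    Tendsto (fun n => a n / n) atTop (𝓝 0) := by
  rw [tendsto_order]
  refine ⟨fun b hb => .of_forall fun n => hb.trans_le (div_nonneg (ha n) n.cast_nonneg),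
    fun b hb => ?_⟩
  obtain ⟨B, hB⟩ := hle (b / 2) (half_pos hb)
  filter_upwards [(tendsto_const_div_atTop_nhds_zero_nat B).eventually (gt_mem_nhds (half_pos hb)),
    eventually_gt_atTop 0] with n hn hn0
  have hn0' : (0 : ℝ) < n := Nat.cast_pos.2 hn0
  rw [div_lt_iff₀ hn0'] at hn ⊢
  linarith [hB n]

theorem ae_tendsto_div_of_le_birkhoffSum (hθ : MeasurePreserving θ P P) {b : ℕ → Ω → ℝ}
    (hb0 : ∀ n ω, 0 ≤ b n ω)
    (hb : ∀ ε > 0, ∃ (h : Ω → ℝ) (B : ℝ), Integrable h P ∧ 0 ≤ᵐ[P] h ∧ ∫ ω, h ω ∂P ≤ ε ∧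
      ∀ᵐ ω ∂P, ∀ n, b n ω ≤ birkhoffSum θ h n ω + B) :
    ∀ᵐ ω ∂P, Tendsto (fun n : ℕ => b n ω / n) atTop (𝓝 0) := by
  have hlinear (c : ℝ) (hc : 0 < c) : ∀ᵐ ω ∂P, ∃ B : ℝ, ∀ n : ℕ, b n ω ≤ c * n + B := by
    rw [ae_iff]
    suffices ENNReal.ofReal c * P {ω | ¬∃ B : ℝ, ∀ n : ℕ, b n ω ≤ c * n + B} = 0 from
      (mul_eq_zero.1 this).resolve_left (ENNReal.ofReal_pos.2 hc).ne'
    refine le_antisymm (ENNReal.le_of_forall_pos_le_add fun ε hε _ => ?_) zero_le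
    obtain ⟨h, B, hi, h0, hint, hle⟩ := hb ε hε
    have hsub : ({ω | ¬∃ B : ℝ, ∀ n : ℕ, b n ω ≤ c * n + B} : Set Ω) ≤ᵐ[P]
        {ω | ∃ n : ℕ, c * n < birkhoffSum θ h n ω} := by
      filter_upwards [hle] with ω hω hnot
      by_contra! hcon
      exact hnot ⟨B, fun n => (hω n).trans (add_le_add_left (not_lt.1 fun hn => hcon ⟨n, hn⟩) B)⟩
    calc ENNReal.ofReal c * P {ω | ¬∃ B : ℝ, ∀ n : ℕ, b n ω ≤ c * n + B}
        ≤ ENNReal.ofReal c * P {ω | ∃ n : ℕ, c * n < birkhoffSum θ h n ω} := by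
          exact mul_le_mul_right (measure_mono_ae hsub) _
      _ ≤ ENNReal.ofReal (∫ ω, h ω ∂P) := mul_measure_exists_lt_birkhoffSum_le hθ hi h0 hc.le
      _ ≤ 0 + ε := by simpa using ENNReal.ofReal_le_ofReal hint
  have hall : ∀ᵐ ω ∂P, ∀ m : ℕ, ∃ B : ℝ, ∀ n : ℕ, b n ω ≤ 1 / (m + 1 : ℝ) * n + B :=
    ae_all_iff.2 fun m => hlinear _ Nat.one_div_pos_of_nat
  filter_upwards [hall] with ω hω
  refine tendsto_div_atTop_zero_of_le_mul_add (hb0 · ω) fun c hc => ?_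
  obtain ⟨m, hm⟩ := exists_nat_one_div_lt hc
  obtain ⟨B, hB⟩ := hω m
  exact ⟨B, fun n => (hB n).trans (by gcongr)⟩

end MaximalInequality

section HahnBanach

theorem exists_linearMap_le_sublinear_eq {V : Type*} [AddCommGroup V] [Module ℝ V] {N : V → ℝ}
    (hsmul : ∀ t : ℝ, 0 < t → ∀ x, N (t • x) = t * N x) (hadd : ∀ x y, N (x + y) ≤ N x + N y)
    (x₀ : V) : ∃ Λ : V →ₗ[ℝ] ℝ, (∀ x, Λ x ≤ N x) ∧ Λ x₀ = N x₀ := by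
  have hzero : N 0 = 0 := by
    have h := hsmul 2 two_pos 0
    rw [smul_zero] at h
    linarith
  have hspan (t : ℝ) : t * N x₀ ≤ N (t • x₀) := by
    rcases lt_trichotomy t 0 with ht | rfl | ht
    · have h := hadd (t • x₀) ((-t) • x₀)
      rw [← add_smul, add_neg_cancel, zero_smul, hzero, hsmul (-t) (neg_pos.2 ht)] at h
      linarith
    · simp [hzero]
    · exact (hsmul t ht x₀).ge
  rcases eq_or_ne x₀ 0 with rfl | hx₀
  · obtain ⟨Λ, -, hΛ⟩ := exists_extension_of_le_sublinear (⊥ : V →ₗ.[ℝ] ℝ) N hsmul hadd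
      (by rintro ⟨x, rfl : x = 0⟩
          exact ((LinearPMap.map_zero _).trans hzero.symm).le)
    exact ⟨Λ, hΛ, by rw [map_zero, hzero]⟩
  · obtain ⟨Λ, hΛ₀, hΛ⟩ := exists_extension_of_le_sublinear
      (LinearPMap.mkSpanSingleton x₀ (N x₀) hx₀) N hsmul hadd (by
        rintro ⟨x, hx⟩
        obtain ⟨t, rfl⟩ := Submodule.mem_span_singleton.1 hx
        rw [LinearPMap.mkSpanSingleton'_apply]
        exact hspan t)
    exact ⟨Λ, hΛ, (hΛ₀ ⟨x₀, Submodule.mem_span_singleton_self x₀⟩).trans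
      (LinearPMap.mkSpanSingleton_apply ℝ ℝ hx₀ _)⟩

end HahnBanach

section OrbitCount

variable {Ω X : Type*} {θ : Ω → Ω} {T : Ω → X → X} {E : Set (Ω × X)} {A : Set X}

/-- The skew product `Θ (ω, x) = (θ ω, T_ω x)`, as a map of all of `Ω × X`. -/
def skewProduct (θ : Ω → Ω) (T : Ω → X → X) (p : Ω × X) : Ω × X := (θ p.1, T p.1 p.2)

theorem skewProduct_iterate (n : ℕ) (ω : Ω) (x : X) :
    (skewProduct θ T)^[n] (ω, x) = (θ^[n] ω, itr T θ n ω x) := by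
  induction n generalizing ω x with
  | zero => rfl
  | succ _ ih => exact ih (θ ω) (T ω x)

theorem birkhoffSum_skewProduct_comp_fst (h : Ω → ℝ) (n : ℕ) (ω : Ω) (x : X) :
    birkhoffSum (skewProduct θ T) (h ∘ Prod.fst) n (ω, x) = birkhoffSum θ h n ω := by
  simp only [birkhoffSum, Function.comp_apply, skewProduct_iterate]

theorem orbCount_eq_birkhoffSum (n : ℕ) (ω : Ω) (x : X) :
    (orbCount T θ A n ω x : ℝ) =
      birkhoffSum (skewProduct θ T) ((univ ×ˢ A).indicator 1) n (ω, x) := by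
  classical
  simp only [orbCount, birkhoffSum, skewProduct_iterate, Nat.card_eq_fintype_card,
    Fintype.card_subtype, Finset.card_filter, indicator_apply, mem_prod, mem_univ, true_and,
    Pi.one_apply]
  rw [Fin.sum_univ_eq_sum_range (fun i => if itr T θ i ω x ∈ A then 1 else 0) n]
  push_cast
  rfl

theorem orbCount_le (n : ℕ) (ω : Ω) (x : X) : orbCount T θ A n ω x ≤ n := by
  classical
  rw [orbCount, Nat.card_eq_fintype_card]
  exact (Fintype.card_subtype_le _).trans_eq (Fintype.card_fin n)

theorem mem_upperBounds_orbCount (n : ℕ) (ω : Ω) :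
    n ∈ upperBounds {m | ∃ x ∈ fiber E ω, m = orbCount T θ A n ω x} := by
  rintro _ ⟨x, -, rfl⟩
  exact orbCount_le n ω x

theorem bsup_le (n : ℕ) (ω : Ω) : bsup T θ E A n ω ≤ n :=
  csSup_le' (mem_upperBounds_orbCount n ω)

theorem orbCount_le_bsup (n : ℕ) {ω : Ω} {x : X} (hx : x ∈ fiber E ω) :
    orbCount T θ A n ω x ≤ bsup T θ E A n ω :=
  le_csSup ⟨n, mem_upperBounds_orbCount n ω⟩ ⟨x, hx, rfl⟩

theorem exists_orbCount_eq_bsup (n : ℕ) {ω : Ω} (hE : (fiber E ω).Nonempty) :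
    ∃ x ∈ fiber E ω, bsup T θ E A n ω = orbCount T θ A n ω x := by
  obtain ⟨x, hx⟩ := hE
  exact Nat.sSup_mem (s := {m | ∃ x ∈ fiber E ω, m = orbCount T θ A n ω x}) ⟨_, x, hx, rfl⟩
    ⟨n, mem_upperBounds_orbCount n ω⟩

theorem ocap_eq_zero_iff {ω : Ω} :
    ocap T θ E A ω = 0 ↔ Tendsto (fun n : ℕ => (bsup T θ E A n ω : ℝ) / n) atTop (𝓝 0) := by
  have hnonneg (n : ℕ) : 0 ≤ (bsup T θ E A n ω : ℝ) / n := by positivity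
  refine ⟨fun h => ?_, fun h => h.limsup_eq⟩
  have habove : IsBoundedUnder (· ≤ ·) atTop fun n : ℕ => (bsup T θ E A n ω : ℝ) / n :=
    isBoundedUnder_of ⟨1, fun n => div_le_one_of_le₀ (Nat.cast_le.2 (bsup_le n ω)) n.cast_nonneg⟩
  exact tendsto_of_le_liminf_of_limsup_le
    (le_liminf_of_le habove.isCoboundedUnder_ge (.of_forall hnonneg)) h.le habove
    (isBoundedUnder_of ⟨0, hnonneg⟩)

variable [MeasurableSpace Ω] [MeasurableSpace X] {μ : Measure (Ω × X)} [IsFiniteMeasure μ]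

theorem tendsto_integral_orbCount_div (hinv : MeasurePreserving (skewProduct θ T) μ μ)
    (hA : MeasurableSet A) (hμE : ∀ᵐ p ∂μ, p ∈ E) (hocap : ∀ᵐ p ∂μ, ocap T θ E A p.1 = 0) :
    Tendsto (fun n : ℕ => ∫ p, (orbCount T θ A n p.1 p.2 : ℝ) / n ∂μ) atTop (𝓝 0) := by
  have hmeas (n : ℕ) : AEStronglyMeasurable (fun p => (orbCount T θ A n p.1 p.2 : ℝ) / n) μ := by
    simp only [orbCount_eq_birkhoffSum]
    exact ((integrable_birkhoffSum hinv
      ((integrable_const 1).indicator (MeasurableSet.univ.prod hA)) n).div_const _).1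
  rw [← integral_zero (Ω × X) ℝ]
  refine tendsto_integral_of_dominated_convergence (fun _ => 1) hmeas (integrable_const 1)
    (fun n => .of_forall fun p => ?_) ?_
  · rw [Real.norm_of_nonneg (by positivity)]
    exact div_le_one_of_le₀ (Nat.cast_le.2 (orbCount_le n p.1 p.2)) n.cast_nonneg
  · filter_upwards [hμE, hocap] with p hp hpcap
    refine squeeze_zero (fun n => by positivity) (fun n => ?_) (ocap_eq_zero_iff.1 hpcap)
    gcongr
    exact orbCount_le_bsup n hp

theorem integral_orbCount (hinv : MeasurePreserving (skewProduct θ T) μ μ) (hA : MeasurableSet A)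
    (n : ℕ) : ∫ p, (orbCount T θ A n p.1 p.2 : ℝ) ∂μ = n * μ.real (univ ×ˢ A) := by
  have hAm : MeasurableSet (univ ×ˢ A : Set (Ω × X)) := .prod .univ hA
  have hi : Integrable ((univ ×ˢ A).indicator (1 : Ω × X → ℝ)) μ :=
    (integrable_const 1).indicator hAm
  simp only [orbCount_eq_birkhoffSum]
  rw [integral_birkhoffSum hinv hi, integral_indicator_one hAm]

theorem measure_univ_prod_eq_zero_of_ae_ocap_eq_zero
    (hinv : MeasurePreserving (skewProduct θ T) μ μ) (hA : MeasurableSet A)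
    (hμE : ∀ᵐ p ∂μ, p ∈ E) (hocap : ∀ᵐ p ∂μ, ocap T θ E A p.1 = 0) : μ (univ ×ˢ A) = 0 := by
  have hlim := tendsto_integral_orbCount_div hinv hA hμE hocap
  have hconst : (fun n : ℕ => ∫ p, (orbCount T θ A n p.1 p.2 : ℝ) / n ∂μ) =ᶠ[atTop]
      fun _ => μ.real (univ ×ˢ A) := by
    filter_upwards [eventually_ne_atTop 0] with n hn
    rw [integral_div, integral_orbCount hinv hA, mul_div_cancel_left₀ _ (Nat.cast_ne_zero.2 hn)]
  exact (measureReal_eq_zero_iff).1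
    (tendsto_nhds_unique (tendsto_const_nhds.congr' hconst.symm) hlim)

end OrbitCount

section UpperMean

/-- The space of bounded real functions on `Z`, without any regularity requirement. -/
def boundedFunctions (Z : Type*) : Submodule ℝ (Z → ℝ) where
  carrier := {f | ∃ B, ∀ z, |f z| ≤ B}
  add_mem' := by
    rintro f g ⟨B, hB⟩ ⟨C, hC⟩
    exact ⟨B + C, fun z => (abs_add_le _ _).trans (add_le_add (hB z) (hC z))⟩
  zero_mem' := ⟨0, fun z => by simp⟩
  smul_mem' := by
    rintro t f ⟨B, hB⟩
    refine ⟨|t| * B, fun z => ?_⟩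
    rw [Pi.smul_apply, smul_eq_mul, abs_mul]
    exact mul_le_mul_of_nonneg_left (hB z) (abs_nonneg t)

theorem indicator_one_mem_boundedFunctions {Z : Type*} (S : Set Z) :
    S.indicator 1 ∈ boundedFunctions Z := by
  refine ⟨1, fun z => ?_⟩
  by_cases hz : z ∈ S <;> simp [hz]

theorem comp_mem_boundedFunctions {Y Z : Type*} {f : Z → ℝ} (hf : f ∈ boundedFunctions Z)
    (g : Y → Z) : f ∘ g ∈ boundedFunctions Y :=
  let ⟨B, hB⟩ := hf
  ⟨B, fun y => hB (g y)⟩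

theorem birkhoffSum_mem_boundedFunctions {Z : Type*} {f : Z → ℝ} (hf : f ∈ boundedFunctions Z)
    (g : Z → Z) (n : ℕ) : birkhoffSum g f n ∈ boundedFunctions Z := by
  have hsum : birkhoffSum g f n = ∑ k ∈ Finset.range n, f ∘ g^[k] := by
    ext z
    simp [birkhoffSum]
  rw [hsum]
  exact Submodule.sum_mem _ fun k _ => comp_mem_boundedFunctions hf _

variable {Ω X : Type*} [MeasurableSpace Ω] {P : Measure Ω} {θ : Ω → Ω} {T : Ω → X → X}
  {E : Set (Ω × X)} {f g : Ω × X → ℝ} {h h' : Ω → ℝ}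

/-- The function `h` of `ω` alone dominates `f` on almost every fiber of `E`, up to a bounded
coboundary `u - u ∘ Θ` of the skew product. The coboundary need not be measurable. -/
structure IsFiberMajorant (P : Measure Ω) (θ : Ω → Ω) (T : Ω → X → X) (E : Set (Ω × X))
    (f : Ω × X → ℝ) (h : Ω → ℝ) : Prop where
  integrable : Integrable h P
  exists_coboundary : ∃ u ∈ boundedFunctions (Ω × X), ∀ᵐ ω ∂P, ∀ x ∈ fiber E ω,
    f (ω, x) ≤ h ω + (u (ω, x) - u (skewProduct θ T (ω, x)))

theorem isFiberMajorant_of_le (hi : Integrable h P)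
    (hle : ∀ᵐ ω ∂P, ∀ x ∈ fiber E ω, f (ω, x) ≤ h ω) : IsFiberMajorant P θ T E f h :=
  ⟨hi, 0, Submodule.zero_mem _, by simpa using hle⟩

theorem exists_isFiberMajorant_of_mem_boundedFunctions [IsFiniteMeasure P]
    (hf : f ∈ boundedFunctions (Ω × X)) : ∃ h, IsFiberMajorant P θ T E f h :=
  let ⟨B, hB⟩ := hf
  ⟨fun _ => B, isFiberMajorant_of_le (integrable_const B)
    (.of_forall fun _ _ _ => (abs_le.1 (hB _)).2)⟩

theorem isFiberMajorant_sub_comp_skewProduct {u : Ω × X → ℝ}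
    (hu : u ∈ boundedFunctions (Ω × X)) :
    IsFiberMajorant P θ T E (u - u ∘ skewProduct θ T) 0 :=
  ⟨integrable_zero _ _ _, u, hu, .of_forall fun ω x _ => by simp⟩

theorem IsFiberMajorant.add (hf : IsFiberMajorant P θ T E f h)
    (hg : IsFiberMajorant P θ T E g h') : IsFiberMajorant P θ T E (f + g) (h + h') := by
  obtain ⟨hi, u, hu, hfu⟩ := hf
  obtain ⟨hi', v, hv, hgv⟩ := hg
  refine ⟨hi.add hi', u + v, Submodule.add_mem _ hu hv, ?_⟩
  filter_upwards [hfu, hgv] with ω hfω hgω x hx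
  simp only [Pi.add_apply]
  linarith [hfω x hx, hgω x hx]

theorem IsFiberMajorant.smul (hf : IsFiberMajorant P θ T E f h) {t : ℝ} (ht : 0 ≤ t) :
    IsFiberMajorant P θ T E (t • f) (t • h) := by
  obtain ⟨hi, u, hu, hfu⟩ := hf
  refine ⟨hi.smul t, t • u, Submodule.smul_mem _ t hu, ?_⟩
  filter_upwards [hfu] with ω hω x hx
  simp only [Pi.smul_apply, smul_eq_mul, ← mul_sub, ← mul_add]
  exact mul_le_mul_of_nonneg_left (hω x hx) ht

theorem ae_forall_skewProduct_iterate (hθ : MeasurePreserving θ P P)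
    (hTmap : ∀ᵐ ω ∂P, MapsTo (T ω) (fiber E ω) (fiber E (θ ω))) {p : Ω × X → Prop}
    (hp : ∀ᵐ ω ∂P, ∀ x ∈ fiber E ω, p (ω, x)) :
    ∀ᵐ ω ∂P, ∀ x ∈ fiber E ω, ∀ n, p ((skewProduct θ T)^[n] (ω, x)) := by
  have hall : ∀ᵐ ω ∂P, ∀ n, MapsTo (T (θ^[n] ω)) (fiber E (θ^[n] ω)) (fiber E (θ (θ^[n] ω))) ∧
      ∀ x ∈ fiber E (θ^[n] ω), p (θ^[n] ω, x) :=
    ae_all_iff.2 fun n => (hθ.iterate n).quasiMeasurePreserving.ae (hTmap.and hp)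
  filter_upwards [hall] with ω hω x hx
  have horbit (n : ℕ) : (skewProduct θ T)^[n] (ω, x) ∈ E := by
    induction n with
    | zero => exact hx
    | succ n ih =>
      rw [skewProduct_iterate] at ih
      rw [Function.iterate_succ_apply', skewProduct_iterate]
      exact (hω n).1 ih
  intro n
  have hn := horbit n
  rw [skewProduct_iterate] at hn ⊢
  exact (hω n).2 _ hn

theorem IsFiberMajorant.birkhoffSum_le (hf : IsFiberMajorant P θ T E f h)
    (hθ : MeasurePreserving θ P P)
    (hTmap : ∀ᵐ ω ∂P, MapsTo (T ω) (fiber E ω) (fiber E (θ ω))) :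
    ∃ C, ∀ᵐ ω ∂P, ∀ x ∈ fiber E ω, ∀ n,
      birkhoffSum (skewProduct θ T) f n (ω, x) ≤ birkhoffSum θ h n ω + C := by
  obtain ⟨-, u, ⟨B, hB⟩, hfu⟩ := hf
  refine ⟨B + B, ?_⟩
  filter_upwards [ae_forall_skewProduct_iterate
    (p := fun z => f z ≤ h z.1 + (u z - u (skewProduct θ T z))) hθ hTmap hfu] with ω hω x hx n
  calc birkhoffSum (skewProduct θ T) f n (ω, x)
      ≤ ∑ k ∈ Finset.range n, (h ((skewProduct θ T)^[k] (ω, x)).1 +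
          (u ((skewProduct θ T)^[k] (ω, x)) - u ((skewProduct θ T)^[k + 1] (ω, x)))) := by
        refine Finset.sum_le_sum fun k _ => ?_
        rw [Function.iterate_succ_apply']
        exact hω x hx k
    _ = birkhoffSum θ h n ω + (u (ω, x) - u ((skewProduct θ T)^[n] (ω, x))) := by
        rw [Finset.sum_add_distrib, Finset.sum_range_sub',
          ← birkhoffSum_skewProduct_comp_fst h n ω x]
        rfl
    _ ≤ birkhoffSum θ h n ω + (B + B) := by
        linarith [(abs_le.1 (hB (ω, x))).2, (abs_le.1 (hB ((skewProduct θ T)^[n] (ω, x)))).1]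

-- The coboundary is that of the average of the Birkhoff sums of orders `0, …, n - 1`.
theorem isFiberMajorant_of_birkhoffSum_le (hf : f ∈ boundedFunctions (Ω × X))
    (hi : Integrable h P) {n : ℕ} (hn : n ≠ 0)
    (hle : ∀ᵐ ω ∂P, ∀ x ∈ fiber E ω,
      birkhoffSum (skewProduct θ T) f n (ω, x) ≤ n * h ω) : IsFiberMajorant P θ T E f h := by
  let u : Ω × X → ℝ := (n : ℝ)⁻¹ • ∑ k ∈ Finset.range n, birkhoffSum (skewProduct θ T) f k
  have hcobound (z : Ω × X) :
      u (skewProduct θ T z) - u z = (n : ℝ)⁻¹ * birkhoffSum (skewProduct θ T) f n z - f z := by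
    simp only [u, Pi.smul_apply, Finset.sum_apply, smul_eq_mul]
    rw [← mul_sub, ← Finset.sum_sub_distrib,
      Finset.sum_congr rfl fun k _ => birkhoffSum_apply_sub_birkhoffSum .., Finset.sum_sub_distrib,
      Finset.sum_const, Finset.card_range, nsmul_eq_mul, mul_sub,
      inv_mul_cancel_left₀ (Nat.cast_ne_zero.2 hn)]
    rfl
  refine ⟨hi, u, Submodule.smul_mem _ _ (Submodule.sum_mem _ fun k _ =>
    birkhoffSum_mem_boundedFunctions hf _ k), ?_⟩
  filter_upwards [hle] with ω hω x hx
  have haverage : (n : ℝ)⁻¹ * birkhoffSum (skewProduct θ T) f n (ω, x) ≤ h ω :=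
    (inv_mul_le_iff₀ (Nat.cast_pos.2 hn.bot_lt)).2 (hω x hx)
  linarith [hcobound (ω, x)]

variable [IsProbabilityMeasure P]

theorem IsFiberMajorant.exists_nonneg (hfh : IsFiberMajorant P θ T E f h)
    (hf : f ∈ boundedFunctions (Ω × X)) (hf0 : 0 ≤ f) (hθ : MeasurePreserving θ P P)
    (hEne : ∀ ω, (fiber E ω).Nonempty)
    (hTmap : ∀ᵐ ω ∂P, MapsTo (T ω) (fiber E ω) (fiber E (θ ω))) {ε : ℝ} (hε : 0 < ε) :
    ∃ h', IsFiberMajorant P θ T E f h' ∧ 0 ≤ᵐ[P] h' ∧ ∫ ω, h' ω ∂P ≤ ∫ ω, h ω ∂P + ε := by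
  obtain ⟨C, hC⟩ := hfh.birkhoffSum_le hθ hTmap
  obtain ⟨n, hnε, hn⟩ : ∃ n : ℕ, C / n < ε ∧ 0 < n :=
    (((tendsto_const_div_atTop_nhds_zero_nat C).eventually (gt_mem_nhds hε)).and
      (eventually_gt_atTop 0)).exists
  have hn' : (n : ℝ) ≠ 0 := Nat.cast_ne_zero.2 hn.ne'
  have hsum : Integrable (birkhoffSum θ h n) P := integrable_birkhoffSum hθ hfh.integrable n
  refine ⟨fun ω => (birkhoffSum θ h n ω + C) / n,
    isFiberMajorant_of_birkhoffSum_le hf ((hsum.add (integrable_const C)).div_const _) hn.ne' ?_,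
    ?_, ?_⟩
  · filter_upwards [hC] with ω hω x hx
    rw [mul_div_cancel₀ _ hn']
    exact hω x hx n
  · filter_upwards [hC] with ω hω
    obtain ⟨x, hx⟩ := hEne ω
    have hsum0 : 0 ≤ birkhoffSum (skewProduct θ T) f n (ω, x) := Finset.sum_nonneg fun k _ => hf0 _
    exact div_nonneg (hsum0.trans (hω x hx n)) n.cast_nonneg
  · rw [integral_div, integral_add hsum (integrable_const C),
      integral_birkhoffSum hθ hfh.integrable, integral_const, probReal_univ, one_smul, add_div,
      mul_div_cancel_left₀ _ hn']
    linarith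

theorem IsFiberMajorant.neg_le_integral (hfh : IsFiberMajorant P θ T E f h) {C : ℝ}
    (hfC : ∀ z, |f z| ≤ C) (hθ : MeasurePreserving θ P P) (hEne : ∀ ω, (fiber E ω).Nonempty)
    (hTmap : ∀ᵐ ω ∂P, MapsTo (T ω) (fiber E ω) (fiber E (θ ω))) : -C ≤ ∫ ω, h ω ∂P := by
  have hconst : IsFiberMajorant P θ T E (fun _ => C) fun _ => C :=
    isFiberMajorant_of_le (integrable_const C) (.of_forall fun _ _ _ => le_rfl)
  have hbdd : (f + fun _ => C) ∈ boundedFunctions (Ω × X) :=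
    Submodule.add_mem _ ⟨C, hfC⟩ ⟨|C|, fun _ => le_rfl⟩
  have hnonneg : 0 ≤ f + fun _ => C := fun z => by
    simpa using neg_le_iff_add_nonneg.1 (abs_le.1 (hfC z)).1
  refine le_of_forall_pos_le_add fun ε hε => ?_
  obtain ⟨h', -, h0, hle⟩ := (hfh.add hconst).exists_nonneg hbdd hnonneg hθ hEne hTmap hε
  simp only [Pi.add_apply] at hle
  rw [integral_add hfh.integrable (integrable_const C), integral_const, probReal_univ,
    one_smul] at hle
  linarith [integral_nonneg_of_ae h0]

/-- The upper mean of `f`: the infimum of the integrals of its majorants, up to bounded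
coboundaries, by functions of `ω`. It is a junk value unless `f` is bounded. -/
noncomputable def upperMean (P : Measure Ω) (θ : Ω → Ω) (T : Ω → X → X) (E : Set (Ω × X))
    (f : Ω × X → ℝ) : ℝ :=
  ⨅ h : {h // IsFiberMajorant P θ T E f h}, ∫ ω, h.1 ω ∂P

theorem upperMean_le (hf : f ∈ boundedFunctions (Ω × X)) (hθ : MeasurePreserving θ P P)
    (hEne : ∀ ω, (fiber E ω).Nonempty)
    (hTmap : ∀ᵐ ω ∂P, MapsTo (T ω) (fiber E ω) (fiber E (θ ω)))
    (hfh : IsFiberMajorant P θ T E f h) : upperMean P θ T E f ≤ ∫ ω, h ω ∂P := by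
  obtain ⟨C, hC⟩ := hf
  exact ciInf_le ⟨-C, forall_mem_range.2 fun h' => h'.2.neg_le_integral hC hθ hEne hTmap⟩
    (⟨h, hfh⟩ : {h // IsFiberMajorant P θ T E f h})

theorem exists_isFiberMajorant_integral_lt (hf : f ∈ boundedFunctions (Ω × X)) {c : ℝ}
    (hc : upperMean P θ T E f < c) : ∃ h, IsFiberMajorant P θ T E f h ∧ ∫ ω, h ω ∂P < c := by
  obtain ⟨h₀, hh₀⟩ := exists_isFiberMajorant_of_mem_boundedFunctions (P := P) (θ := θ) (T := T)
    (E := E) hf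
  have : Nonempty {h // IsFiberMajorant P θ T E f h} := ⟨⟨h₀, hh₀⟩⟩
  obtain ⟨⟨h, hh⟩, hlt⟩ := exists_lt_of_ciInf_lt hc
  exact ⟨h, hh, hlt⟩

theorem upperMean_add_le (hf : f ∈ boundedFunctions (Ω × X)) (hg : g ∈ boundedFunctions (Ω × X))
    (hθ : MeasurePreserving θ P P) (hEne : ∀ ω, (fiber E ω).Nonempty)
    (hTmap : ∀ᵐ ω ∂P, MapsTo (T ω) (fiber E ω) (fiber E (θ ω))) :
    upperMean P θ T E (f + g) ≤ upperMean P θ T E f + upperMean P θ T E g := by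
  refine le_of_forall_pos_lt_add fun ε hε => ?_
  obtain ⟨h, hh, hlt⟩ := exists_isFiberMajorant_integral_lt (P := P) (θ := θ) (T := T) (E := E) hf
    (lt_add_of_pos_right _ (half_pos hε))
  obtain ⟨h', hh', hlt'⟩ := exists_isFiberMajorant_integral_lt (P := P) (θ := θ) (T := T) (E := E)
    hg (lt_add_of_pos_right _ (half_pos hε))
  calc upperMean P θ T E (f + g)
      ≤ ∫ ω, (h + h') ω ∂P := upperMean_le (Submodule.add_mem _ hf hg) hθ hEne hTmap (hh.add hh')
    _ = ∫ ω, h ω ∂P + ∫ ω, h' ω ∂P := integral_add hh.integrable hh'.integrable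
    _ < upperMean P θ T E f + upperMean P θ T E g + ε := by linarith

theorem upperMean_smul_le (hf : f ∈ boundedFunctions (Ω × X)) {t : ℝ} (ht : 0 < t)
    (hθ : MeasurePreserving θ P P) (hEne : ∀ ω, (fiber E ω).Nonempty)
    (hTmap : ∀ᵐ ω ∂P, MapsTo (T ω) (fiber E ω) (fiber E (θ ω))) :
    upperMean P θ T E (t • f) ≤ t * upperMean P θ T E f := by
  rw [← div_le_iff₀' ht]
  refine le_of_forall_gt_imp_ge_of_dense fun c hc => ?_
  obtain ⟨h, hh, hlt⟩ := exists_isFiberMajorant_integral_lt hf hc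
  rw [div_le_iff₀' ht]
  calc upperMean P θ T E (t • f)
      ≤ ∫ ω, (t • h) ω ∂P :=
        upperMean_le (Submodule.smul_mem _ t hf) hθ hEne hTmap (hh.smul ht.le)
    _ = t * ∫ ω, h ω ∂P := integral_const_mul t h
    _ ≤ t * c := mul_le_mul_of_nonneg_left hlt.le ht.le

theorem upperMean_smul (hf : f ∈ boundedFunctions (Ω × X)) {t : ℝ} (ht : 0 < t)
    (hθ : MeasurePreserving θ P P) (hEne : ∀ ω, (fiber E ω).Nonempty)
    (hTmap : ∀ᵐ ω ∂P, MapsTo (T ω) (fiber E ω) (fiber E (θ ω))) :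
    upperMean P θ T E (t • f) = t * upperMean P θ T E f := by
  refine le_antisymm (upperMean_smul_le hf ht hθ hEne hTmap) ?_
  have hinv := upperMean_smul_le (Submodule.smul_mem _ t hf) (inv_pos.2 ht) hθ hEne hTmap
  rwa [inv_smul_smul₀ ht.ne', le_inv_mul_iff₀ ht] at hinv

theorem ae_ocap_eq_zero_of_upperMean_le_zero (hθ : MeasurePreserving θ P P)
    (hEne : ∀ ω, (fiber E ω).Nonempty)
    (hTmap : ∀ᵐ ω ∂P, MapsTo (T ω) (fiber E ω) (fiber E (θ ω))) {A : Set X}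
    (hA : upperMean P θ T E ((univ ×ˢ A).indicator 1) ≤ 0) :
    ∀ᵐ ω ∂P, ocap T θ E A ω = 0 := by
  have hbdd := indicator_one_mem_boundedFunctions (univ ×ˢ A : Set (Ω × X))
  simp only [ocap_eq_zero_iff]
  refine ae_tendsto_div_of_le_birkhoffSum hθ (fun _ _ => Nat.cast_nonneg _) fun ε hε => ?_
  obtain ⟨h, hh, hlt⟩ := exists_isFiberMajorant_integral_lt hbdd (hA.trans_lt (half_pos hε))
  obtain ⟨h', hh', h0, hle⟩ := hh.exists_nonneg hbdd (indicator_nonneg fun _ _ => zero_le_one)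
    hθ hEne hTmap (half_pos hε)
  obtain ⟨C, hC⟩ := hh'.birkhoffSum_le hθ hTmap
  refine ⟨h', C, hh'.integrable, h0, by linarith, ?_⟩
  filter_upwards [hC] with ω hω n
  obtain ⟨x, hx, hb⟩ := exists_orbCount_eq_bsup (θ := θ) (T := T) (A := A) n (hEne ω)
  rw [hb, orbCount_eq_birkhoffSum]
  exact hω x hx n

end UpperMean

section FiberMean

variable {Ω X : Type*} [MeasurableSpace Ω] {P : Measure Ω} {θ : Ω → Ω} {T : Ω → X → X}
  {E : Set (Ω × X)} {Λ : (Ω × X → ℝ) →ₗ[ℝ] ℝ} {f g : Ω × X → ℝ} {h : Ω → ℝ}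

/-- `Λ` is dominated by the upper mean on bounded functions. Such a functional is the finitely
additive counterpart of an invariant measure carried by `E` with marginal `P`. -/
def IsFiberMean (P : Measure Ω) (θ : Ω → Ω) (T : Ω → X → X) (E : Set (Ω × X))
    (Λ : (Ω × X → ℝ) →ₗ[ℝ] ℝ) : Prop :=
  ∀ ⦃f⦄, f ∈ boundedFunctions (Ω × X) → ∀ ⦃h⦄, IsFiberMajorant P θ T E f h → Λ f ≤ ∫ ω, h ω ∂P

theorem exists_isFiberMean_eq_upperMean [IsProbabilityMeasure P] (hθ : MeasurePreserving θ P P)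
    (hEne : ∀ ω, (fiber E ω).Nonempty)
    (hTmap : ∀ᵐ ω ∂P, MapsTo (T ω) (fiber E ω) (fiber E (θ ω)))
    (hf : f ∈ boundedFunctions (Ω × X)) :
    ∃ Λ, IsFiberMean P θ T E Λ ∧ Λ f = upperMean P θ T E f := by
  obtain ⟨Λ, hΛ, hΛf⟩ := exists_linearMap_le_sublinear_eq
    (N := fun g : boundedFunctions (Ω × X) => upperMean P θ T E g)
    (fun _ ht g => by exact upperMean_smul g.2 ht hθ hEne hTmap)
    (fun g₁ g₂ => by exact upperMean_add_le g₁.2 g₂.2 hθ hEne hTmap) ⟨f, hf⟩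
  obtain ⟨Λ', rfl⟩ := Λ.exists_extend
  exact ⟨Λ', fun g hg h hh => (hΛ ⟨g, hg⟩).trans (upperMean_le hg hθ hEne hTmap hh), hΛf⟩

namespace IsFiberMean

theorem le_integral (hΛ : IsFiberMean P θ T E Λ) (hf : f ∈ boundedFunctions (Ω × X))
    (hi : Integrable h P) (hle : ∀ᵐ ω ∂P, ∀ x ∈ fiber E ω, f (ω, x) ≤ h ω) :
    Λ f ≤ ∫ ω, h ω ∂P :=
  hΛ hf (isFiberMajorant_of_le hi hle)

theorem nonpos (hΛ : IsFiberMean P θ T E Λ) (hf : f ∈ boundedFunctions (Ω × X))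
    (hle : ∀ᵐ ω ∂P, ∀ x ∈ fiber E ω, f (ω, x) ≤ 0) : Λ f ≤ 0 := by
  simpa using hΛ.le_integral hf (integrable_zero Ω ℝ P) hle

theorem mono (hΛ : IsFiberMean P θ T E Λ) (hf : f ∈ boundedFunctions (Ω × X))
    (hg : g ∈ boundedFunctions (Ω × X)) (hle : f ≤ g) : Λ f ≤ Λ g := by
  have hsub : Λ (f - g) ≤ 0 := hΛ.nonpos (Submodule.sub_mem _ hf hg)
    (.of_forall fun ω x _ => sub_nonpos.2 (hle (ω, x)))
  rwa [map_sub, sub_nonpos] at hsub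

theorem nonneg (hΛ : IsFiberMean P θ T E Λ) (hf : f ∈ boundedFunctions (Ω × X)) (h0 : 0 ≤ f) :
    0 ≤ Λ f :=
  (map_zero Λ).ge.trans (hΛ.mono (Submodule.zero_mem _) hf h0)

theorem comp_fst (hΛ : IsFiberMean P θ T E Λ) (hh : h ∈ boundedFunctions Ω)
    (hi : Integrable h P) : Λ (h ∘ Prod.fst) = ∫ ω, h ω ∂P := by
  have hbdd : h ∘ Prod.fst ∈ boundedFunctions (Ω × X) := comp_mem_boundedFunctions hh _
  refine le_antisymm (hΛ.le_integral hbdd hi (.of_forall fun _ _ _ => le_rfl)) ?_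
  have hneg := hΛ.le_integral (Submodule.neg_mem _ hbdd) hi.neg (.of_forall fun _ _ _ => le_rfl)
  simp only [map_neg, Pi.neg_apply, integral_neg] at hneg
  exact neg_le_neg_iff.1 hneg

theorem comp_skewProduct (hΛ : IsFiberMean P θ T E Λ) (hf : f ∈ boundedFunctions (Ω × X)) :
    Λ (f ∘ skewProduct θ T) = Λ f := by
  have hle {u : Ω × X → ℝ} (hu : u ∈ boundedFunctions (Ω × X)) :
      Λ u ≤ Λ (u ∘ skewProduct θ T) := by
    have hsub := hΛ (Submodule.sub_mem _ hu (comp_mem_boundedFunctions hu _))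
      (isFiberMajorant_sub_comp_skewProduct (P := P) (E := E) hu)
    simpa using hsub
  refine le_antisymm ?_ (hle hf)
  have hneg : Λ (-f) ≤ Λ (-(f ∘ skewProduct θ T)) := hle (Submodule.neg_mem _ hf)
  rwa [map_neg, map_neg, neg_le_neg_iff] at hneg

end IsFiberMean

-- Dini's theorem on the compact fibers.
theorem measure_iInter_image_fst_setOf_le_eq_zero [TopologicalSpace X] [T2Space X]
    (hEcp : ∀ ω, IsCompact (fiber E ω)) {f : ℕ → Ω × X → ℝ} (hanti : Antitone f)
    (hcont : ∀ n, ∀ᵐ ω ∂P, ContinuousOn (fun x => f n (ω, x)) (fiber E ω))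
    (hlim : ∀ z, Tendsto (f · z) atTop (𝓝 0)) {ε : ℝ} (hε : 0 < ε) :
    P (⋂ n, Prod.fst '' (E ∩ {z | ε ≤ f n z})) = 0 := by
  refine measure_mono_null (fun ω hω => ?_) (ae_iff.1 (ae_all_iff.2 hcont))
  intro hcontω
  let K (n : ℕ) : Set X := fiber E ω ∩ {x | ε ≤ f n (ω, x)}
  have hclosed (n : ℕ) : IsClosed (K n) :=
    (hcontω n).preimage_isClosed_of_isClosed (hEcp ω).isClosed isClosed_Ici
  have hne (n : ℕ) : (K n).Nonempty := by
    obtain ⟨⟨_, x⟩, hx, rfl⟩ := mem_iInter.1 hω n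
    exact ⟨x, hx⟩
  obtain ⟨x, hx⟩ := IsCompact.nonempty_iInter_of_sequence_nonempty_isCompact_isClosed K
    (fun n => inter_subset_inter_right _ fun x hx => le_trans hx (hanti n.le_succ (ω, x))) hne
    ((hEcp ω).of_isClosed_subset (hclosed 0) inter_subset_left) hclosed
  exact hε.not_ge (ge_of_tendsto' (hlim (ω, x)) fun n => (mem_iInter.1 hx n).2)

variable [TopologicalSpace X] [PolishSpace X] [MeasurableSpace X] [BorelSpace X]

theorem nullMeasurableSet_image_fst_setOf_le [IsFiniteMeasure P] (hE : MeasurableSet E)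
    (hf : Measurable f) (ε : ℝ) : NullMeasurableSet (Prod.fst '' (E ∩ {z | ε ≤ f z})) P :=
  nullMeasurableSet_image_fst P (hE.inter (measurableSet_le measurable_const hf))

theorem IsFiberMean.le_add_mul_measureReal_image_fst [IsProbabilityMeasure P]
    (hΛ : IsFiberMean P θ T E Λ) (hE : MeasurableSet E) (hf : Measurable f)
    (hfb : f ∈ boundedFunctions (Ω × X)) {C : ℝ} (hC : ∀ z, f z ≤ C) {ε : ℝ} (hε : 0 ≤ ε) :
    Λ f ≤ ε + C * P.real (Prod.fst '' (E ∩ {z | ε ≤ f z})) := by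
  set D : Set Ω := Prod.fst '' (E ∩ {z | ε ≤ f z})
  have hDm : NullMeasurableSet D P := nullMeasurableSet_image_fst_setOf_le hE hf ε
  have hi : Integrable (D.indicator fun _ => C) P := (integrable_const C).indicator₀ hDm
  have hle (ω : Ω) (x : X) (hx : x ∈ fiber E ω) : f (ω, x) ≤ ε + D.indicator (fun _ => C) ω := by
    by_cases hω : ω ∈ D
    · rw [indicator_of_mem hω]
      linarith [hC (ω, x)]
    · rw [indicator_of_notMem hω, add_zero]
      by_contra! hlt
      exact hω ⟨(ω, x), ⟨hx, hlt.le⟩, rfl⟩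
  calc Λ f ≤ ∫ ω, (ε + D.indicator (fun _ => C) ω) ∂P :=
        hΛ.le_integral hfb ((integrable_const ε).add hi) (.of_forall hle)
    _ = ε + C * P.real D := by
        rw [integral_add (integrable_const ε) hi, integral_indicator₀ hDm]
        simp [mul_comm]

theorem IsFiberMean.tendsto_map_of_antitone [IsProbabilityMeasure P] (hΛ : IsFiberMean P θ T E Λ)
    (hE : MeasurableSet E) (hEcp : ∀ ω, IsCompact (fiber E ω)) {f : ℕ → Ω × X → ℝ}
    (hf : ∀ n, Measurable (f n)) (hfb : ∀ n, f n ∈ boundedFunctions (Ω × X))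
    (hcont : ∀ n, ∀ᵐ ω ∂P, ContinuousOn (fun x => f n (ω, x)) (fiber E ω)) (hanti : Antitone f)
    (hlim : ∀ z, Tendsto (f · z) atTop (𝓝 0)) : Tendsto (fun n => Λ (f n)) atTop (𝓝 0) := by
  have h0 (n : ℕ) : 0 ≤ f n := fun z =>
    Antitone.le_of_tendsto (fun i j hij => hanti hij z) (hlim z) n
  obtain ⟨C, hC⟩ := hfb 0
  have hfC (n : ℕ) (z : Ω × X) : f n z ≤ C := (hanti n.zero_le z).trans (abs_le.1 (hC z)).2
  refine tendsto_order.2 ⟨fun a ha => .of_forall fun n => ha.trans_le (hΛ.nonneg (hfb n) (h0 n)),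
    fun ε hε => ?_⟩
  let D (n : ℕ) : Set Ω := Prod.fst '' (E ∩ {z | ε / 2 ≤ f n z})
  have hDlim : Tendsto (fun n => P (D n)) atTop (𝓝 0) := by
    rw [← measure_iInter_image_fst_setOf_le_eq_zero hEcp hanti hcont hlim (half_pos hε)]
    exact tendsto_measure_iInter_atTop
      (fun n => nullMeasurableSet_image_fst_setOf_le hE (hf n) (ε / 2))
      (fun i j hij => image_mono (inter_subset_inter_right _ fun z hz => hz.trans (hanti hij z)))
      ⟨0, measure_ne_top _ _⟩
  have hbound : Tendsto (fun n => ε / 2 + C * P.real (D n)) atTop (𝓝 (ε / 2)) := by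
    have hreal := (ENNReal.tendsto_toReal ENNReal.zero_ne_top).comp hDlim
    simpa [measureReal_def] using (hreal.const_mul C).const_add (ε / 2)
  filter_upwards [hbound.eventually_lt_const (half_lt_self hε)] with n hn
  exact (hΛ.le_add_mul_measureReal_image_fst hE (hf n) (hfb n) (hfC n) (half_pos hε).le).trans_lt hn

end FiberMean

section FiberContinuous

theorem exists_continuous_setOf_pos_eq {X : Type*} [TopologicalSpace X]
    [TopologicalSpace.PseudoMetrizableSpace X] {U : Set X} (hU : IsOpen U) :
    ∃ φ ∈ boundedFunctions X, Continuous φ ∧ {x | 0 < φ x} = U := by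
  let := TopologicalSpace.pseudoMetrizableSpacePseudoMetric X
  rcases Uᶜ.eq_empty_or_nonempty with h | h
  · exact ⟨1, ⟨1, by simp⟩, continuous_one, by simp [compl_empty_iff.1 h]⟩
  · refine ⟨fun x => min 1 (Metric.infDist x Uᶜ), ⟨1, fun x => ?_⟩,
      continuous_const.min (Metric.continuous_infDist_pt _), ?_⟩
    · rw [abs_of_nonneg (le_min zero_le_one Metric.infDist_nonneg)]
      exact min_le_left _ _
    · ext x
      rw [mem_ofPred_eq, lt_min_iff, ← hU.isClosed_compl.notMem_iff_infDist_pos h,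
        notMem_compl_iff]
      exact and_iff_right zero_lt_one

variable {Ω X : Type*} [MeasurableSpace Ω] {P : Measure Ω} {θ : Ω → Ω} {T : Ω → X → X}
  {E : Set (Ω × X)} {Λ : (Ω × X → ℝ) →ₗ[ℝ] ℝ} [TopologicalSpace X] [MeasurableSpace X]

/-- The space of bounded measurable functions that are continuous on almost every fiber of `E`. -/
def fiberContinuousFunctions (P : Measure Ω) (E : Set (Ω × X)) : Submodule ℝ (Ω × X → ℝ) where
  carrier := {f | Measurable f ∧ f ∈ boundedFunctions (Ω × X) ∧
    ∀ᵐ ω ∂P, ContinuousOn (fun x => f (ω, x)) (fiber E ω)}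
  add_mem' := by
    rintro f g ⟨hf, hfb, hfc⟩ ⟨hg, hgb, hgc⟩
    refine ⟨hf.add hg, Submodule.add_mem _ hfb hgb, ?_⟩
    filter_upwards [hfc, hgc] with ω hfω hgω using hfω.add hgω
  zero_mem' := ⟨measurable_const, Submodule.zero_mem _, .of_forall fun _ => continuousOn_const⟩
  smul_mem' := by
    rintro t f ⟨hf, hfb, hfc⟩
    refine ⟨hf.const_smul t, Submodule.smul_mem _ t hfb, ?_⟩
    filter_upwards [hfc] with ω hω using hω.const_smul t

theorem isUnitalVectorLattice_fiberContinuousFunctions :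
    IsUnitalVectorLattice (fiberContinuousFunctions P E) where
  one_mem := ⟨measurable_one, ⟨1, fun _ => by simp⟩, .of_forall fun _ => continuousOn_const⟩
  sup_mem := by
    rintro f ⟨hf, ⟨B, hB⟩, hfc⟩ g ⟨hg, ⟨C, hC⟩, hgc⟩
    refine ⟨hf.sup hg, ⟨B ⊔ C, fun z => ?_⟩, ?_⟩
    · exact abs_max_le_max_abs_abs.trans (sup_le_sup (hB z) (hC z))
    · filter_upwards [hfc, hgc] with ω hfω hgω using hfω.sup hgω

theorem comp_skewProduct_mem_fiberContinuousFunctions (hθ : MeasurePreserving θ P P)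
    (hTm : Measurable (skewProduct θ T))
    (hTmap : ∀ᵐ ω ∂P, MapsTo (T ω) (fiber E ω) (fiber E (θ ω)))
    (hTc : ∀ᵐ ω ∂P, ContinuousOn (T ω) (fiber E ω)) {f : Ω × X → ℝ}
    (hf : f ∈ fiberContinuousFunctions P E) :
    f ∘ skewProduct θ T ∈ fiberContinuousFunctions P E := by
  obtain ⟨hm, hb, hc⟩ := hf
  refine ⟨hm.comp hTm, comp_mem_boundedFunctions hb _, ?_⟩
  filter_upwards [hTmap, hTc, hθ.quasiMeasurePreserving.ae hc] with ω hmaps hT hf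
  exact hf.comp hT hmaps

theorem indicator_preimage_fst_mem_fiberContinuousFunctions {A : Set Ω} (hA : MeasurableSet A) :
    (Prod.fst ⁻¹' A : Set (Ω × X)).indicator 1 ∈ fiberContinuousFunctions P E :=
  ⟨measurable_one.indicator (measurable_fst hA), indicator_one_mem_boundedFunctions _,
    .of_forall fun ω => continuousOn_const (c := A.indicator (1 : Ω → ℝ) ω)⟩

theorem indicator_compl_mem_fiberContinuousFunctions (hE : MeasurableSet E) :
    Eᶜ.indicator 1 ∈ fiberContinuousFunctions P E :=
  ⟨measurable_one.indicator hE.compl, indicator_one_mem_boundedFunctions _,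
    .of_forall fun _ => (continuousOn_const (c := (0 : ℝ))).congr fun _ hx =>
      indicator_of_notMem (s := Eᶜ) (notMem_compl_iff.2 hx) 1⟩

theorem comp_snd_mem_fiberContinuousFunctions [OpensMeasurableSpace X] {φ : X → ℝ}
    (hφ : Continuous φ) (hφb : φ ∈ boundedFunctions X) :
    φ ∘ Prod.snd ∈ fiberContinuousFunctions P E :=
  ⟨hφ.measurable.comp measurable_snd, comp_mem_boundedFunctions hφb _,
    .of_forall fun _ => hφ.continuousOn⟩

theorem isDaniellOpen_preimage_snd [TopologicalSpace.PseudoMetrizableSpace X]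
    [OpensMeasurableSpace X] {U : Set X} (hU : IsOpen U) :
    IsDaniellOpen (fiberContinuousFunctions P E) (Prod.snd ⁻¹' U) := by
  obtain ⟨φ, hφb, hφ, rfl⟩ := exists_continuous_setOf_pos_eq hU
  exact isUnitalVectorLattice_fiberContinuousFunctions.isDaniellOpen_setOf_pos
    (comp_snd_mem_fiberContinuousFunctions hφ hφb)

theorem prod_eq_generateFrom_isDaniellOpen [TopologicalSpace.PseudoMetrizableSpace X]
    [BorelSpace X] :
    (inferInstance : MeasurableSpace (Ω × X)) = .generateFrom
      {S | IsDaniellOpen (fiberContinuousFunctions P E) S} := by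
  refine le_antisymm (sup_le ?_ ?_) (MeasurableSpace.generateFrom_le fun S hS =>
    measurableSet_of_isDaniellOpen (fun f (hf : f ∈ fiberContinuousFunctions P E) => hf.1) hS)
  · rintro _ ⟨A, hA, rfl⟩
    exact MeasurableSpace.measurableSet_generateFrom
      ⟨_, approximatesIndicator_indicator (indicator_preimage_fst_mem_fiberContinuousFunctions hA)⟩
  · exact Measurable.comap_le (@measurable_of_isOpen _ _ _ _ _ (_) _ fun U hU =>
      MeasurableSpace.measurableSet_generateFrom (isDaniellOpen_preimage_snd hU))

namespace IsFiberMean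

variable [IsProbabilityMeasure P] (hΛ : IsFiberMean P θ T E Λ)
include hΛ

theorem innerContent_univ_prod_compl_le (A : Set X) :
    innerContent (fiberContinuousFunctions P E) Λ (univ ×ˢ A)ᶜ ≤
      ENNReal.ofReal (1 - Λ ((univ ×ˢ A).indicator 1)) := by
  have hone : Λ 1 = 1 := by
    simpa using hΛ.comp_fst (h := 1) ⟨1, fun _ => by simp⟩ (integrable_const 1)
  refine iSup₂_le fun f hf => ENNReal.ofReal_le_ofReal ?_
  have hle : Λ f ≤ Λ ((univ ×ˢ A)ᶜ.indicator 1) :=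
    hΛ.mono hf.1.2.1 (indicator_one_mem_boundedFunctions _) hf.2
  rwa [indicator_compl, map_sub, hone] at hle

variable [PolishSpace X] [BorelSpace X]

theorem isDaniellIntegral (hE : MeasurableSet E) (hEcp : ∀ ω, IsCompact (fiber E ω)) :
    IsDaniellIntegral (fiberContinuousFunctions P E) Λ where
  toIsUnitalVectorLattice := isUnitalVectorLattice_fiberContinuousFunctions
  map_nonneg _ hf h0 := hΛ.nonneg hf.2.1 h0
  tendsto_map_zero _ hf hanti hlim := hΛ.tendsto_map_of_antitone hE hEcp (fun n => (hf n).1)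
    (fun n => (hf n).2.1) (fun n => (hf n).2.2) hanti hlim

theorem innerContent_preimage_fst (hE : MeasurableSet E) (hEcp : ∀ ω, IsCompact (fiber E ω))
    {A : Set Ω} (hA : MeasurableSet A) :
    innerContent (fiberContinuousFunctions P E) Λ (Prod.fst ⁻¹' A) = P A := by
  rw [(hΛ.isDaniellIntegral hE hEcp).innerContent_of_indicator_mem
      (indicator_preimage_fst_mem_fiberContinuousFunctions hA),
    show (Prod.fst ⁻¹' A).indicator (1 : Ω × X → ℝ) = A.indicator 1 ∘ Prod.fst from rfl,
    hΛ.comp_fst (indicator_one_mem_boundedFunctions A) ((integrable_const 1).indicator hA),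
    integral_indicator_one hA, ofReal_measureReal]

theorem innerContent_compl_eq_zero (hE : MeasurableSet E)
    (hEcp : ∀ ω, IsCompact (fiber E ω)) :
    innerContent (fiberContinuousFunctions P E) Λ Eᶜ = 0 := by
  rw [(hΛ.isDaniellIntegral hE hEcp).innerContent_of_indicator_mem
      (indicator_compl_mem_fiberContinuousFunctions hE), ENNReal.ofReal_eq_zero]
  exact hΛ.nonpos (indicator_one_mem_boundedFunctions _) (.of_forall fun ω x hx =>
    (indicator_of_notMem (s := Eᶜ) (notMem_compl_iff.2 hx) 1).le)

theorem exists_invariant_measure (hθ : MeasurePreserving θ P P) (hE : MeasurableSet E)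
    (hEcp : ∀ ω, IsCompact (fiber E ω)) (hTm : Measurable (skewProduct θ T))
    (hTmap : ∀ᵐ ω ∂P, MapsTo (T ω) (fiber E ω) (fiber E (θ ω)))
    (hTc : ∀ᵐ ω ∂P, ContinuousOn (T ω) (fiber E ω)) :
    ∃ μ : Measure (Ω × X), IsProbabilityMeasure μ ∧ μ.map Prod.fst = P ∧ μ E = 1 ∧
      MeasurePreserving (skewProduct θ T) μ μ ∧ ∀ A : Set X, IsClosed A →
        μ (univ ×ˢ A)ᶜ ≤ ENNReal.ofReal (1 - Λ ((univ ×ˢ A).indicator 1)) := by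
  have hint := hΛ.isDaniellIntegral hE hEcp
  have hgen := prod_eq_generateFrom_isDaniellOpen (P := P) (E := E)
  obtain ⟨μ, hμ⟩ := hint.exists_measure_eq_innerContent hgen
  have hfst : μ.map Prod.fst = P := by
    ext A hA
    rw [Measure.map_apply measurable_fst hA, hμ _ ⟨_, approximatesIndicator_indicator
      (indicator_preimage_fst_mem_fiberContinuousFunctions hA)⟩,
      hΛ.innerContent_preimage_fst hE hEcp hA]
  have hprob : IsProbabilityMeasure μ := by
    have : IsProbabilityMeasure (μ.map Prod.fst) := by rwa [hfst]
    exact Measure.isProbabilityMeasure_of_map Prod.fst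
  have hEc : μ Eᶜ = 0 := by
    rw [hμ _ ⟨_, approximatesIndicator_indicator (indicator_compl_mem_fiberContinuousFunctions hE)⟩,
      hΛ.innerContent_compl_eq_zero hE hEcp]
  refine ⟨μ, hprob, hfst, (prob_compl_eq_zero_iff hE).1 hEc, ?_, fun A hA => ?_⟩
  · exact hint.measurePreserving_of_comp hgen hμ hTm
      (fun f hf => comp_skewProduct_mem_fiberContinuousFunctions hθ hTm hTmap hTc hf)
      fun f hf => hΛ.comp_skewProduct hf.2.1
  · have hopen : IsDaniellOpen (fiberContinuousFunctions P E) (univ ×ˢ A)ᶜ := by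
      rw [univ_prod, ← preimage_compl]
      exact isDaniellOpen_preimage_snd hA.isOpen_compl
    exact (hμ _ hopen).trans_le (hΛ.innerContent_univ_prod_compl_le A)

end IsFiberMean

end FiberContinuous

theorem stmt17_general
    {Ω X : Type*} [MeasurableSpace Ω] (P : Measure Ω) [IsProbabilityMeasure P]
    [TopologicalSpace X] [PolishSpace X] [MeasurableSpace X] [BorelSpace X]
    (θ : Ω → Ω) (hθ : MeasurePreserving θ P P) (E : Set (Ω × X)) (hE : MeasurableSet E)
    (hEne : ∀ ω, (fiber E ω).Nonempty) (hEcp : ∀ ω, IsCompact (fiber E ω))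
    (T : Ω → X → X) (hTm : Measurable fun p : Ω × X => T p.1 p.2)
    (hTmap : ∀ᵐ ω ∂P, MapsTo (T ω) (fiber E ω) (fiber E (θ ω)))
    (hTc : ∀ᵐ ω ∂P, ContinuousOn (T ω) (fiber E ω))
    (A : Set X) (hA : IsClosed A) :
    (∀ᵐ ω ∂P, ocap T θ E A ω = 0) ↔
      ∀ μ : Measure (Ω × X), IsProbabilityMeasure μ → μ.map Prod.fst = P → μ E = 1 →
        μ.map (fun p : Ω × X => (θ p.1, T p.1 p.2)) = μ → μ (univ ×ˢ A) = 0 := by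
  have hΘ : Measurable (skewProduct θ T) := (hθ.measurable.comp measurable_fst).prodMk hTm
  refine ⟨fun hocap μ _ hfst hμE hinv => ?_, fun hnull => ?_⟩
  · have hmarginal : MeasurePreserving Prod.fst μ P := ⟨measurable_fst, hfst⟩
    exact measure_univ_prod_eq_zero_of_ae_ocap_eq_zero ⟨hΘ, hinv⟩ hA.measurableSet
      ((mem_ae_iff_prob_eq_one hE).2 hμE) (hmarginal.quasiMeasurePreserving.ae hocap)
  · obtain ⟨Λ, hΛ, hΛA⟩ := exists_isFiberMean_eq_upperMean hθ hEne hTmap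
      (indicator_one_mem_boundedFunctions (univ ×ˢ A))
    obtain ⟨μ, hprob, hfst, hμE, hinv, hle⟩ := hΛ.exists_invariant_measure hθ hE hEcp hΘ hTmap hTc
    have hcompl : μ (univ ×ˢ A)ᶜ = 1 := (prob_compl_eq_one_iff (.prod .univ hA.measurableSet)).2
      (hnull μ hprob hfst hμE hinv.map_eq)
    have hone := hcompl.ge.trans (hle A hA)
    rw [ENNReal.one_le_ofReal, hΛA] at hone
    exact ae_ocap_eq_zero_of_upperMean_le_zero hθ hEne hTmap (by linarith)

theorem stmt17
    {Ω X : Type*} [MeasurableSpace Ω]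
    (P : MeasureTheory.Measure Ω) [MeasureTheory.IsProbabilityMeasure P] [P.IsComplete]
    [MetricSpace X] [CompactSpace X] [MeasurableSpace X] [BorelSpace X]
    (θ : Ω → Ω) (hθ : MeasureTheory.MeasurePreserving θ P P)
    (E : Set (Ω × X)) (hE : MeasurableSet E)
    (hEne : ∀ ω, (fiber E ω).Nonempty) (hEcp : ∀ ω, IsCompact (fiber E ω))
    (T : Ω → X → X) (hTm : Measurable fun p : Ω × X => T p.1 p.2)
    (hTmap : ∀ᵐ ω ∂P, Set.MapsTo (T ω) (fiber E ω) (fiber E (θ ω)))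
    (hTc : ∀ᵐ ω ∂P, ContinuousOn (T ω) (fiber E ω))
    (E' : Set X) (hE' : IsClosed E') :
    (∀ᵐ ω ∂P, ocap T θ E E' ω = 0) ↔
      ∀ μ : MeasureTheory.Measure (Ω × X), MeasureTheory.IsProbabilityMeasure μ →
        μ.map Prod.fst = P → μ E = 1 →
        μ.map (fun p : Ω × X => (θ p.1, T p.1 p.2)) = μ →
        μ (Set.univ ×ˢ E') = 0 :=
  stmt17_general P θ hθ E hE hEne hEcp T hTm hTmap hTc E' hE'
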